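/- arXiv:1807.11166 — 8 statements merged into one kernel-verified Lean document; each statement's English description precedes it below -/
import Mathlib

section
/- Let X be a real normed linear space and let x be a unit vector in X. If x is a right symmetric point and x is a smooth point, then x is a left symmetric point. -/
open Filter Topology Set

/-- Birkhoff–James orthogonality: `x ⊥_B y` iff `‖x + t • y‖ ≥ ‖x‖` for all real `t`.
For bounded linear operators this is orthogonality in the operator norm. -/
def BJOrth {E : Type*} [NormedAddCommGroup E] [NormedSpace ℝ E] (x y : E) : Prop :=
  ∀ t : ℝ, ‖x‖ ≤ ‖x + t • y‖

/-- A point `x` is left symmetric if `x ⊥_B y` implies `y ⊥_B x` for all `y`. -/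
def LeftSymPt {E : Type*} [NormedAddCommGroup E] [NormedSpace ℝ E] (x : E) : Prop :=
  ∀ y : E, BJOrth x y → BJOrth y x

/-- A point `x` is right symmetric if `y ⊥_B x` implies `x ⊥_B y` for all `y`. -/
def RightSymPt {E : Type*} [NormedAddCommGroup E] [NormedSpace ℝ E] (x : E) : Prop :=
  ∀ y : E, BJOrth y x → BJOrth x y

/-- A unit vector `x` is a smooth point if it has a unique norming functional. -/
def SmoothPt {E : Type*} [NormedAddCommGroup E] [NormedSpace ℝ E] (x : E) : Prop :=
  ∃! f : E →L[ℝ] ℝ, ‖f‖ = 1 ∧ f x = 1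

/-- A normed space is reflexive if the canonical embedding into the double dual is surjective. -/
def ReflexiveSp (E : Type*) [NormedAddCommGroup E] [NormedSpace ℝ E] : Prop :=
  Function.Surjective (NormedSpace.inclusionInDoubleDual ℝ E)

/-- The Kadets–Klee property: weak convergence of a sequence together with convergence of norms
implies norm convergence. -/
def KadetsKlee (E : Type*) [NormedAddCommGroup E] [NormedSpace ℝ E] : Prop :=
  ∀ (x : ℕ → E) (x₀ : E),
    (∀ f : E →L[ℝ] ℝ, Tendsto (fun n => f (x n)) atTop (nhds (f x₀))) →
    Tendsto (fun n => ‖x n‖) atTop (nhds ‖x₀‖) →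
    Tendsto (fun n => ‖x n - x₀‖) atTop (nhds 0)

/-- The norm attaining set `M_T` of a bounded linear operator. -/
def normAttain {X Y : Type*} [NormedAddCommGroup X] [NormedSpace ℝ X]
    [NormedAddCommGroup Y] [NormedSpace ℝ Y] (T : X →L[ℝ] Y) : Set X :=
  {x | ‖x‖ = 1 ∧ ‖T x‖ = ‖T‖}

/-- `inPlus u v` means `v ∈ u⁺`, i.e. `‖u + t • v‖ ≥ ‖u‖` for all `t ≥ 0`. -/
def inPlus {E : Type*} [NormedAddCommGroup E] [NormedSpace ℝ E] (u v : E) : Prop :=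
  ∀ t : ℝ, 0 ≤ t → ‖u‖ ≤ ‖u + t • v‖

/-- `inMinus u v` means `v ∈ u⁻`, i.e. `‖u + t • v‖ ≥ ‖u‖` for all `t ≤ 0`. -/
def inMinus {E : Type*} [NormedAddCommGroup E] [NormedSpace ℝ E] (u v : E) : Prop :=
  ∀ t : ℝ, t ≤ 0 → ‖u‖ ≤ ‖u + t • v‖

/-- If `x ⊥_B z` and `x` is a unit vector, then some norm-one functional supports the unit ball
at `x` and vanishes at `z`. -/
theorem BJOrth.exists_norming_functional {X : Type*} [NormedAddCommGroup X] [NormedSpace ℝ X]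
    {x z : X} (hx : ‖x‖ = 1) (h : BJOrth x z) :
    ∃ g : X →L[ℝ] ℝ, (‖g‖ = 1 ∧ g x = 1) ∧ g z = 0 := by
  let S : Submodule ℝ X := Submodule.span ℝ {z}
  have : IsClosed (S : Set X) := S.closed_of_finiteDimensional
  have hnorm : ‖S.mkQ x‖ = 1 := by
    refine le_antisymm ((Submodule.Quotient.norm_mk_le S x).trans_eq hx) ?_
    refine le_of_forall_pos_lt_add fun ε hε => ?_
    obtain ⟨m, hm, hlt⟩ := Submodule.Quotient.norm_mk_lt (S.mkQ x) hε
    obtain ⟨t, ht⟩ := Submodule.mem_span_singleton.1 ((Submodule.Quotient.eq S).1 hm)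
    calc 1 ≤ ‖x + t • z‖ := hx ▸ h t
      _ = ‖m‖ := by rw [ht, add_sub_cancel]
      _ < ‖S.mkQ x‖ + ε := hlt
  obtain ⟨φ, hφ, hφx⟩ := exists_dual_vector ℝ (S.mkQ x)
    (by rw [hnorm]; exact one_ne_zero)
  let g : X →L[ℝ] ℝ := φ.toLinearMap.comp S.mkQ |>.mkContinuous 1 fun v => by
    calc ‖φ (S.mkQ v)‖ ≤ ‖φ‖ * ‖S.mkQ v‖ := φ.le_opNorm _
      _ ≤ 1 * ‖v‖ := by
        rw [hφ]
        gcongr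
        exact Submodule.Quotient.norm_mk_le S v
  have hgx : g x = 1 := by
    change φ (S.mkQ x) = 1
    rw [hφx, hnorm, RCLike.ofReal_one]
  refine ⟨g, ⟨le_antisymm (LinearMap.mkContinuous_norm_le _ zero_le_one _) ?_, hgx⟩, ?_⟩
  · simpa [hgx, hx] using g.le_opNorm x
  · change φ (S.mkQ z) = 0
    have hz : S.mkQ z = 0 :=
      (Submodule.Quotient.mk_eq_zero S).2 (Submodule.mem_span_singleton_self z)
    rw [hz, map_zero]

/-- For a unit vector `x`, every line in direction `x` contains a vector orthogonal to `x`. -/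
theorem exists_bjOrth_add_smul {X : Type*} [NormedAddCommGroup X] [NormedSpace ℝ X]
    {x : X} (hx : ‖x‖ = 1) (y : X) : ∃ s : ℝ, BJOrth (y + s • x) x := by
  have hlim : Tendsto (fun s : ℝ => ‖y + s • x‖) (cocompact ℝ) atTop := by
    refine tendsto_atTop_mono (fun s => ?_)
      (tendsto_atTop_add_const_right _ (-‖y‖) (tendsto_norm_cocompact_atTop (E := ℝ)))
    have := norm_sub_le (y + s • x) y
    rw [add_sub_cancel_left, norm_smul, hx, mul_one] at this
    linarith
  have hcont : Continuous fun s : ℝ => ‖y + s • x‖ := by fun_prop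
  obtain ⟨s, hs⟩ := hcont.exists_forall_le hlim
  refine ⟨s, fun t => ?_⟩
  rw [add_assoc, ← add_smul]
  exact hs (s + t)

theorem right_symmetric_smooth_implies_left_symmetric
    {X : Type*} [NormedAddCommGroup X] [NormedSpace ℝ X]
    (x : X) (hx : ‖x‖ = 1) (hright : RightSymPt x) (hsmooth : SmoothPt x) :
    LeftSymPt x := by
  intro y hxy
  obtain ⟨s, hs⟩ := exists_bjOrth_add_smul hx y
  obtain ⟨f, hf, hfy⟩ := hxy.exists_norming_functional hx
  obtain ⟨g, hg, hgs⟩ := (hright _ hs).exists_norming_functional hx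
  obtain rfl := hsmooth.unique hf hg
  have hs0 : s = 0 := by simpa [hfy, hf.2] using hgs
  simpa [hs0] using hs
end

section
/- Let X be a strictly convex real normed linear space and let x be a unit vector in X. If x is a left symmetric point, then x is a right symmetric point. -/
open Filter Topology Set

/-- A vector annihilated by a norming functional of `x` is Birkhoff–James orthogonal to `x`. -/
theorem BJOrth.of_norming {E : Type*} [NormedAddCommGroup E] [NormedSpace ℝ E] {x y : E}
    {f : E →L[ℝ] ℝ} (hf : ‖f‖ = 1) (hfx : f x = ‖x‖) (hfy : f y = 0) : BJOrth x y := by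
  intro t
  calc ‖x‖ = f (x + t • y) := by simp [hfx, hfy]
    _ ≤ ‖f (x + t • y)‖ := le_abs_self _
    _ ≤ ‖f‖ * ‖x + t • y‖ := f.le_opNorm _
    _ = ‖x + t • y‖ := by rw [hf, one_mul]

/-- In a strictly convex space, a line of direction `x` meets the vectors Birkhoff–James
orthogonal to `x` in at most one point. -/
theorem BJOrth.eq_of_add_smul {E : Type*} [NormedAddCommGroup E] [NormedSpace ℝ E]
    [StrictConvexSpace ℝ E] {x y : E} {c : ℝ} (hy : BJOrth y x) (hz : BJOrth (y + c • x) x) :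
    y = y + c • x := by
  have hle : ‖y + c • x‖ ≤ ‖y‖ := by simpa [add_assoc, ← add_smul] using hz (-c)
  have heq : ‖y‖ = ‖y + c • x‖ := le_antisymm (hy c) hle
  refine eq_of_norm_eq_of_norm_add_eq heq (le_antisymm (norm_add_le _ _) ?_)
  have hmid : y + (y + c • x) = (2 : ℝ) • (y + (c / 2) • x) := by module
  rw [hmid, norm_smul, Real.norm_ofNat]
  linarith [hy (c / 2)]

theorem left_symmetric_implies_right_symmetric_of_strictConvex
    {X : Type*} [NormedAddCommGroup X] [NormedSpace ℝ X] [StrictConvexSpace ℝ X]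
    (x : X) (hx : ‖x‖ = 1) (hleft : LeftSymPt x) :
    RightSymPt x := by
  intro y hy
  obtain ⟨f, hf, hfx⟩ := exists_dual_vector ℝ x (norm_ne_zero_iff.mp (by simp [hx]))
  replace hfx : f x = ‖x‖ := by simpa using hfx
  have hxz : BJOrth x (y + (-f y) • x) := .of_norming hf hfx (by simp [hfx, hx])
  rwa [← hy.eq_of_add_smul (hleft _ hxz)] at hxz
end

section
/- Let X be a real reflexive Banach space with the Kadets–Klee property, let Y be a real Banach space, let T : X → Y be a compact bounded linear operator, and let A : X → Y be a bounded linear operator with T ⊥_B A. If in addition M_T = D ∪ (−D) where D is a compact connected subset of the unit sphere of X, then there exists x ∈ M_T such that Tx ⊥_B Ax. -/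
open Filter Topology Set

section ReflexiveCompactness

variable {X Y : Type*} [NormedAddCommGroup X] [NormedSpace ℝ X]
  [NormedAddCommGroup Y] [NormedSpace ℝ Y]

/-- In a reflexive space every family in the unit ball converges weakly along any ultrafilter. -/
theorem ReflexiveSp.exists_weak_limit (hrefl : ReflexiveSp X) {ι : Type*} (U : Ultrafilter ι)
    {x : ι → X} (hx : ∀ i, ‖x i‖ ≤ 1) :
    ∃ y : X, ∀ f : X →L[ℝ] ℝ, Tendsto (fun i => f (x i)) U (𝓝 (f y)) := by
  let φ : ι → WeakDual ℝ (StrongDual ℝ X) := fun i =>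
    StrongDual.toWeakDual (NormedSpace.inclusionInDoubleDual ℝ X (x i))
  have hφ : ∀ i, φ i ∈ WeakDual.toStrongDual ⁻¹'
      Metric.closedBall (0 : StrongDual ℝ (StrongDual ℝ X)) 1 := by
    intro i
    have h := (NormedSpace.double_dual_bound ℝ X (x i)).trans (hx i)
    exact (dist_zero_right (E := StrongDual ℝ (StrongDual ℝ X)) _).trans_le h
  obtain ⟨ψ, -, hψ⟩ := (WeakDual.isCompact_closedBall (𝕜 := ℝ)
    (0 : StrongDual ℝ (StrongDual ℝ X)) 1).ultrafilter_le_nhds (U.map φ)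
    (tendsto_principal.2 (Eventually.of_forall hφ))
  obtain ⟨y, hy⟩ := hrefl (WeakDual.toStrongDual ψ)
  refine ⟨y, fun f => ?_⟩
  have h1 : Tendsto (fun i => φ i f) U (𝓝 (ψ f)) :=
    ((WeakDual.eval_continuous f).tendsto ψ).comp hψ
  have h2 : ψ f = f y := by
    have := congrArg (fun g => g f) hy
    simpa using this.symm
  rw [← h2]
  exact h1

/-- A weak limit of points of a closed subspace lies in the subspace. -/
theorem Submodule.mem_of_weak_limit (Z : Submodule ℝ X) (hZ : IsClosed (Z : Set X))
    {ι : Type*} {l : Filter ι} [l.NeBot] {x : ι → X} (hx : ∀ i, x i ∈ Z) {y : X}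
    (hy : ∀ f : X →L[ℝ] ℝ, Tendsto (fun i => f (x i)) l (𝓝 (f y))) : y ∈ Z := by
  by_contra hyZ
  obtain ⟨f, u, hfu, huf⟩ := geometric_hahn_banach_closed_point Z.convex hZ hyZ
  have h0 : ∀ z ∈ Z, f z = 0 := by
    intro z hz
    by_contra hne
    have := hfu (((u + 1) / f z) • z) (Z.smul_mem _ hz)
    rw [map_smul, smul_eq_mul, div_mul_cancel₀ _ hne] at this
    linarith
  have h1 := hfu 0 Z.zero_mem
  have h2 : f y = 0 := tendsto_nhds_unique (hy f) (by simp [h0 _ (hx _)])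
  simp only [map_zero] at h1
  linarith

/-- A separable set is separated by countably many continuous linear functionals. -/
theorem TopologicalSpace.IsSeparable.exists_separating_functionals {Z : Set X}
    (hZ : TopologicalSpace.IsSeparable Z) :
    ∃ F : ℕ → X →L[ℝ] ℝ, ∀ w ∈ Z, (∀ k, F k w = 0) → w = 0 := by
  obtain ⟨c, hc, hZc⟩ := hZ
  rcases Z.eq_empty_or_nonempty with rfl | hne
  · exact ⟨fun _ => 0, by simp⟩
  have hcne : c.Nonempty := closure_nonempty_iff.1 (hne.mono hZc)
  obtain ⟨z, rfl⟩ := hc.exists_eq_range hcne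
  choose F hF1 hF2 using fun k => exists_dual_vector'' ℝ (z k)
  refine ⟨F, fun w hw h0 => ?_⟩
  by_contra hw0
  obtain ⟨_, ⟨k, rfl⟩, hk⟩ :=
    Metric.mem_closure_iff.1 (hZc hw) (‖w‖ / 2) (by positivity)
  rw [dist_eq_norm] at hk
  have h1 : ‖z k‖ ≤ ‖w - z k‖ := by
    calc ‖z k‖ = F k (z k) := by simpa using (hF2 k).symm
      _ = -F k (w - z k) := by simp [h0 k]
      _ ≤ ‖F k (w - z k)‖ := neg_le_abs _
      _ ≤ 1 * ‖w - z k‖ := (F k).le_of_opNorm_le (hF1 k) _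
      _ = ‖w - z k‖ := one_mul _
  have h2 : ‖w‖ ≤ ‖w - z k‖ + ‖z k‖ := by simpa using norm_add_le (w - z k) (z k)
  linarith

/-- Bounded sequences in reflexive spaces have weakly convergent subsequences. -/
theorem ReflexiveSp.exists_weak_subseq (hrefl : ReflexiveSp X) {x : ℕ → X}
    (hx : ∀ n, ‖x n‖ ≤ 1) :
    ∃ (y : X) (φ : ℕ → ℕ), StrictMono φ ∧
      ∀ f : X →L[ℝ] ℝ, Tendsto (fun n => f (x (φ n))) atTop (𝓝 (f y)) := by
  let Z : Submodule ℝ X := (Submodule.span ℝ (range x)).topologicalClosure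
  have hZ : IsClosed (Z : Set X) := Submodule.isClosed_topologicalClosure _
  have hxZ : ∀ n, x n ∈ Z := fun n =>
    Submodule.le_topologicalClosure _ (Submodule.subset_span (mem_range_self n))
  have hsep : TopologicalSpace.IsSeparable (Z : Set X) :=
    ((countable_range x).isSeparable.span (R := ℝ)).closure
  obtain ⟨F, hF⟩ := hsep.exists_separating_functionals
  let U : Ultrafilter ℕ := Ultrafilter.of atTop
  have hU : (U : Filter ℕ) ≤ atTop := Ultrafilter.of_le _
  obtain ⟨y, hy⟩ := hrefl.exists_weak_limit U hx
  have hyZ : y ∈ Z := Z.mem_of_weak_limit hZ hxZ hy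
  have hcl : MapClusterPt (fun k => F k y) atTop (fun n k => F k (x n)) :=
    (tendsto_pi_nhds.2 fun k => hy (F k)).mapClusterPt.mono hU
  obtain ⟨φ, hφ, hlim⟩ := hcl.tendsto_subseq
  refine ⟨y, φ, hφ, fun f => tendsto_iff_ultrafilter _ _ _ |>.2 fun V hV => ?_⟩
  obtain ⟨y', hy'⟩ := hrefl.exists_weak_limit V (x := x ∘ φ) fun n => hx _
  have hyZ' : y' ∈ Z := Z.mem_of_weak_limit hZ (fun n => hxZ (φ n)) hy'
  have : y' - y = 0 := hF _ (Z.sub_mem hyZ' hyZ) fun k => by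
    have h := tendsto_nhds_unique (hy' (F k)) ((tendsto_pi_nhds.1 hlim k).mono_left hV)
    rw [map_sub, h, sub_self]
  rw [← sub_eq_zero.1 this]
  exact hy' f

/-- The norm is weakly lower semicontinuous on the unit ball. -/
theorem norm_le_one_of_weak_limit {ι : Type*} {l : Filter ι} [l.NeBot] {x : ι → X}
    (hx : ∀ i, ‖x i‖ ≤ 1) {y : X}
    (hy : ∀ f : X →L[ℝ] ℝ, Tendsto (fun i => f (x i)) l (𝓝 (f y))) : ‖y‖ ≤ 1 := by
  obtain ⟨f, hf1, hf2⟩ := exists_dual_vector'' ℝ y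
  have hf2 : f y = ‖y‖ := by simpa using hf2
  rw [← hf2]
  refine le_of_tendsto (hy f) (Eventually.of_forall fun i => (le_abs_self _).trans ?_)
  simpa using (f.le_of_opNorm_le hf1 (x i)).trans (by simpa using hx i)

/-- Compact operators map weakly convergent sequences of the unit ball to norm convergent ones. -/
theorem IsCompactOperator.tendsto_of_weak_limit {T : X →L[ℝ] Y} (hT : IsCompactOperator T)
    {ι : Type*} {l : Filter ι} {x : ι → X} (hx : ∀ i, ‖x i‖ ≤ 1) {y : X}
    (hy : ∀ f : X →L[ℝ] ℝ, Tendsto (fun i => f (x i)) l (𝓝 (f y))) :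
    Tendsto (fun i => T (x i)) l (𝓝 (T y)) := by
  have hK : IsCompact (closure (T '' Metric.closedBall 0 1)) :=
    hT.isCompact_closure_image_closedBall (f := (T : X →ₗ[ℝ] Y)) 1
  refine tendsto_iff_ultrafilter _ _ _ |>.2 fun V hV => ?_
  obtain ⟨w, -, hw⟩ := hK.ultrafilter_le_nhds (V.map fun i => T (x i))
    (tendsto_principal.2 (Eventually.of_forall fun i =>
      subset_closure (mem_image_of_mem T (by simpa using hx i))))
  have hw' : Tendsto (fun i => T (x i)) V (𝓝 w) := hw
  have : w = T y := by
    refine SeparatingDual.eq_iff_forall_dual_eq (R := ℝ) |>.2 fun g => ?_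
    exact tendsto_nhds_unique ((g.continuous.tendsto w).comp hw')
      ((hy (g.comp T)).mono_left hV)
  rw [← this]
  exact hw'

end ReflexiveCompactness

section PlusMinus

variable {E X Y : Type*} [NormedAddCommGroup E] [NormedSpace ℝ E]
  [NormedAddCommGroup X] [NormedSpace ℝ X] [NormedAddCommGroup Y] [NormedSpace ℝ Y]

theorem inPlus_or_inMinus (u v : E) : inPlus u v ∨ inMinus u v := by
  by_contra! h
  obtain ⟨h1, h2⟩ := h
  simp only [inPlus, inMinus, not_forall, not_le] at h1 h2
  obtain ⟨s, hs, hsu⟩ := h1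
  obtain ⟨t, ht, htu⟩ := h2
  have hs' : 0 < s := hs.lt_of_ne fun h => by simp [← h] at hsu
  have key : (s - t) • u = (-t) • (u + s • v) + s • (u + t • v) := by module
  have h3 := norm_add_le ((-t) • (u + s • v)) (s • (u + t • v))
  rw [← key, norm_smul, norm_smul, norm_smul, Real.norm_of_nonneg (by linarith),
    Real.norm_of_nonneg (by linarith), Real.norm_of_nonneg hs] at h3
  nlinarith

theorem inPlus_neg_right {u v : E} : inPlus u (-v) ↔ inMinus u v :=
  ⟨fun h t ht => by simpa using h (-t) (by linarith),
    fun h t ht => by simpa using h (-t) (by linarith)⟩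

theorem inPlus_neg_neg {u v : E} : inPlus (-u) (-v) ↔ inPlus u v := by
  have h : ∀ t : ℝ, ‖-u + t • -v‖ = ‖u + t • v‖ := fun t => by
    rw [← norm_neg]; congr 1; module
  simp only [inPlus, norm_neg, h]

theorem isClosed_setOf_inPlus (T A : X →L[ℝ] Y) : IsClosed {x | inPlus (T x) (A x)} := by
  simp only [inPlus, Set.ofPred_forall]
  exact isClosed_iInter fun t => isClosed_iInter fun _ =>
    isClosed_le (by fun_prop) (by fun_prop)

/-- Almost norming vectors of `T + ε • A` almost witness `A x ∈ (T x)⁺`. -/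
theorem le_norm_add_smul_of_almost_norming {T A : X →L[ℝ] Y} {x : X} (hx : ‖x‖ ≤ 1)
    {ε t : ℝ} (hε : 0 < ε) (hεt : ε ≤ t) (h : ‖T‖ - ε ^ 2 ≤ ‖(T + ε • A) x‖) :
    ‖T‖ - t * ε ≤ ‖T x + t • A x‖ := by
  have ht : 0 < t := hε.trans_le hεt
  have key : t • (T + ε • A) x = (t - ε) • T x + ε • (T x + t • A x) := by
    simp only [add_apply, smul_apply]
    module
  have h1 := norm_add_le ((t - ε) • T x) (ε • (T x + t • A x))
  rw [← key, norm_smul, norm_smul, norm_smul, Real.norm_of_nonneg ht.le,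
    Real.norm_of_nonneg (by linarith), Real.norm_of_nonneg hε.le] at h1
  have h2 : ‖T x‖ ≤ ‖T‖ := T.unit_le_opNorm x hx
  have h3 : t * (‖T‖ - ε ^ 2) ≤ (t - ε) * ‖T‖ + ε * ‖T x + t • A x‖ :=
    (mul_le_mul_of_nonneg_left h ht.le).trans
      (h1.trans (by gcongr))
  refine le_of_mul_le_mul_left ?_ hε
  nlinarith

theorem exists_normAttain_inPlus (hrefl : ReflexiveSp X) (hKK : KadetsKlee X)
    {T A : X →L[ℝ] Y} (hTcpt : IsCompactOperator T) (hT : T ≠ 0) (hTA : inPlus T A) :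
    ∃ x ∈ normAttain T, inPlus (T x) (A x) := by
  have hTpos : 0 < ‖T‖ := norm_pos_iff.2 hT
  let ε : ℕ → ℝ := fun n => 1 / ((n : ℝ) + 1)
  have hεpos : ∀ n, 0 < ε n := fun n => by positivity
  have hεlim : Tendsto ε atTop (𝓝 0) := tendsto_one_div_add_atTop_nhds_zero_nat
  have hex : ∀ n, ∃ x : X, ‖x‖ < 1 ∧ ‖T‖ - ε n ^ 2 < ‖(T + ε n • A) x‖ := fun n =>
    (T + ε n • A).exists_lt_apply_of_lt_opNorm (by
      have := hTA (ε n) (hεpos n).le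
      have := pow_pos (hεpos n) 2
      linarith)
  choose x hx1 hx2 using hex
  obtain ⟨y, φ, hφ, hy⟩ := hrefl.exists_weak_subseq fun n => (hx1 n).le
  have hxφ : ∀ n, ‖x (φ n)‖ ≤ 1 := fun n => (hx1 _).le
  have hεφ : Tendsto (fun n => ε (φ n)) atTop (𝓝 0) := hεlim.comp hφ.tendsto_atTop
  have hTy : Tendsto (fun n => T (x (φ n))) atTop (𝓝 (T y)) :=
    hTcpt.tendsto_of_weak_limit hxφ hy
  have hlow : ∀ n, ‖T‖ - ε (φ n) ^ 2 - ε (φ n) * ‖A‖ ≤ ‖T (x (φ n))‖ := by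
    intro n
    have h1 := norm_add_le (T (x (φ n))) (ε (φ n) • A (x (φ n)))
    rw [norm_smul, Real.norm_of_nonneg (hεpos _).le] at h1
    have h2 := mul_le_mul_of_nonneg_left (A.unit_le_opNorm _ (hxφ n)) (hεpos (φ n)).le
    have h3 := hx2 (φ n)
    simp only [add_apply, smul_apply] at h3
    linarith
  have hTnorm : Tendsto (fun n => ‖T (x (φ n))‖) atTop (𝓝 ‖T‖) := by
    refine tendsto_of_tendsto_of_tendsto_of_le_of_le ?_ tendsto_const_nhds hlow
      fun n => T.unit_le_opNorm _ (hxφ n)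
    simpa using (tendsto_const_nhds.sub (hεφ.pow 2)).sub (hεφ.mul_const ‖A‖)
  have hTy' : ‖T y‖ = ‖T‖ := tendsto_nhds_unique hTy.norm hTnorm
  have hy1 : ‖y‖ = 1 := by
    refine (norm_le_one_of_weak_limit hxφ hy).antisymm ?_
    have := T.le_opNorm y
    rw [hTy'] at this
    exact le_of_mul_le_mul_left (by simpa using this) hTpos
  have hnorm : Tendsto (fun n => ‖x (φ n)‖) atTop (𝓝 ‖y‖) := by
    rw [hy1]
    refine tendsto_of_tendsto_of_tendsto_of_le_of_le (g := fun n => ‖T (x (φ n))‖ / ‖T‖)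
      ?_ tendsto_const_nhds (fun n => ?_) hxφ
    · simpa [hTpos.ne'] using hTnorm.div_const ‖T‖
    · exact (div_le_iff₀' hTpos).2 (T.le_opNorm _)
  have hstrong : Tendsto (fun n => x (φ n)) atTop (𝓝 y) :=
    tendsto_iff_norm_sub_tendsto_zero.2 (hKK _ y hy hnorm)
  refine ⟨y, ⟨hy1, hTy'⟩, fun t ht => ?_⟩
  rcases ht.eq_or_lt with rfl | ht
  · simp
  have hlim : Tendsto (fun n => ‖T (x (φ n)) + t • A (x (φ n))‖) atTop
      (𝓝 ‖T y + t • A y‖) :=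
    (hTy.add (((A.continuous.tendsto y).comp hstrong).const_smul t)).norm
  have hlim' : Tendsto (fun n => ‖T‖ - t * ε (φ n)) atTop (𝓝 ‖T‖) := by
    simpa using tendsto_const_nhds.sub (hεφ.const_mul t)
  rw [hTy']
  refine le_of_tendsto_of_tendsto hlim' hlim ?_
  filter_upwards [hεφ.eventually_le_const ht] with n hn
  exact le_norm_add_smul_of_almost_norming (hxφ n) (hεpos _) hn (hx2 _).le

theorem exists_mem_inPlus_of_normAttain_eq {T A : X →L[ℝ] Y} {D : Set X}
    (hMT : normAttain T = D ∪ (-D)) (h : ∃ x ∈ normAttain T, inPlus (T x) (A x)) :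
    ∃ x ∈ D, inPlus (T x) (A x) := by
  obtain ⟨x, hx, hp⟩ := h
  rw [hMT] at hx
  rcases hx with hx | hx
  · exact ⟨x, hx, hp⟩
  · exact ⟨-x, hx, by simpa [inPlus_neg_neg] using hp⟩

end PlusMinus

theorem operator_orthogonality_pointwise_of_connected_normAttain
    {X Y : Type*} [NormedAddCommGroup X] [NormedSpace ℝ X] [CompleteSpace X]
    [NormedAddCommGroup Y] [NormedSpace ℝ Y] [CompleteSpace Y]
    (hrefl : ReflexiveSp X) (hKK : KadetsKlee X)
    (T : X →L[ℝ] Y) (hTcpt : IsCompactOperator T) (A : X →L[ℝ] Y)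
    (hTA : BJOrth T A)
    (D : Set X) (hDcpt : IsCompact D) (hDconn : IsConnected D)
    (hDsphere : D ⊆ Metric.sphere (0 : X) 1)
    (hMT : normAttain T = D ∪ (-D)) :
    ∃ x ∈ normAttain T, BJOrth (T x) (A x) := by
  have hD : D ⊆ normAttain T := hMT ▸ subset_union_left
  rcases eq_or_ne T 0 with rfl | hT
  · obtain ⟨x, hx⟩ := hDconn.nonempty
    exact ⟨x, hD hx, fun t => by simp⟩
  have hplus := exists_mem_inPlus_of_normAttain_eq hMT
    (exists_normAttain_inPlus hrefl hKK hTcpt hT fun t _ => hTA t)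
  have hminus := exists_mem_inPlus_of_normAttain_eq (A := -A) hMT
    (exists_normAttain_inPlus hrefl hKK hTcpt hT (inPlus_neg_right.2 fun t _ => hTA t))
  obtain ⟨x, hxD, hxp, hxm⟩ := isPreconnected_closed_iff.1 hDconn.isPreconnected _ _
    (isClosed_setOf_inPlus T A) (isClosed_setOf_inPlus T (-A))
    (fun x _ => (inPlus_or_inMinus (T x) (A x)).imp id inPlus_neg_right.2) hplus hminus
  refine ⟨x, hD hxD, fun t => ?_⟩
  rcases le_total 0 t with ht | ht
  · exact hxp t ht
  · exact inPlus_neg_right.1 hxm t ht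
end

section
/- Let X and Y be real normed linear spaces with X strictly convex and reflexive (and X complete), and let T : X → Y be a compact bounded linear operator that is left symmetric in the operator space with ‖T‖ = 1. If x₁ ∈ M_T, y is a unit vector of X, and y ⊥_B x₁, then Ty = 0. -/
open Filter Topology Set

/-- If `y ⊥_B x`, some functional of norm at most one norms `y` and vanishes at `x`. -/
lemma BJOrth.exists_functional {E : Type*} [NormedAddCommGroup E] [NormedSpace ℝ E] {x y : E}
    (h : BJOrth y x) : ∃ f : StrongDual ℝ E, ‖f‖ ≤ 1 ∧ f y = ‖y‖ ∧ f x = 0 := by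
  let S : Submodule ℝ E := Submodule.span ℝ {x}
  have hnorm : ‖S.mkQ y‖ = ‖y‖ := by
    refine le_antisymm (Submodule.Quotient.norm_mk_le S y) ?_
    refine QuotientAddGroup.le_norm_iff.2 fun m hm => ?_
    have hmem : m - y ∈ S := (Submodule.Quotient.eq S).1 hm
    obtain ⟨t, ht⟩ := Submodule.mem_span_singleton.1 hmem
    simpa [ht] using h t
  obtain ⟨g, hg, hgy⟩ := exists_dual_vector'' ℝ (S.mkQ y)
  refine ⟨(g.toLinearMap.comp S.mkQ).mkContinuous 1 fun z => ?_,
    LinearMap.mkContinuous_norm_le _ zero_le_one _, ?_, ?_⟩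
  · calc ‖g (S.mkQ z)‖ ≤ 1 * ‖S.mkQ z‖ := g.le_of_opNorm_le hg _
      _ ≤ 1 * ‖z‖ := by gcongr; exact Submodule.Quotient.norm_mk_le S z
  · change g (S.mkQ y) = _
    rw [hgy, hnorm]
    rfl
  · change g (S.mkQ x) = 0
    have hx : S.mkQ x = 0 :=
      (Submodule.Quotient.mk_eq_zero S).2 (Submodule.mem_span_singleton_self x)
    rw [hx, map_zero]

/-- In a reflexive space, a family in the unit ball converges weakly along every ultrafilter to a
point of the unit ball. -/
lemma ReflexiveSp.exists_weak_limit_s5 {E ι : Type*} [NormedAddCommGroup E] [NormedSpace ℝ E]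
    (hE : ReflexiveSp E) (U : Ultrafilter ι) {u : ι → E} (hu : ∀ i, ‖u i‖ ≤ 1) :
    ∃ x : E, ‖x‖ ≤ 1 ∧ ∀ g : StrongDual ℝ E, Tendsto (fun i => g (u i)) U (𝓝 (g x)) := by
  let J := NormedSpace.inclusionInDoubleDual ℝ E
  have hJ (z : E) : ‖J z‖ = ‖z‖ := (NormedSpace.inclusionInDoubleDualLi ℝ (E := E)).norm_map z
  let v : ι → WeakDual ℝ (StrongDual ℝ E) := fun i => StrongDual.toWeakDual (J (u i))
  obtain ⟨φ, hφ, hlim⟩ := (WeakDual.isCompact_closedBall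
    (0 : StrongDual ℝ (StrongDual ℝ E)) 1).ultrafilter_le_nhds (U.map v) (by
      refine tendsto_principal.2 (Eventually.of_forall fun i => ?_)
      exact (mem_closedBall_zero_iff (E := StrongDual ℝ (StrongDual ℝ E))).2
        ((hJ (u i)).trans_le (hu i)))
  obtain ⟨x, hx⟩ := hE (WeakDual.toStrongDual φ)
  refine ⟨x, ?_, fun g => ?_⟩
  · rw [← hJ, show J x = _ from hx]
    simpa using hφ
  · have hg := ((WeakDual.eval_continuous g).tendsto φ).comp (show Tendsto v U (𝓝 φ) from hlim)
    have hgx : g x = φ g := DFunLike.congr_fun hx g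
    rw [hgx]
    exact hg

/-- A compact operator maps weakly convergent families in the unit ball to norm convergent ones. -/
lemma IsCompactOperator.tendsto_of_weak_tendsto {E F ι : Type*} [NormedAddCommGroup E]
    [NormedSpace ℝ E] [NormedAddCommGroup F] [NormedSpace ℝ F] {T : E →L[ℝ] F}
    (hT : IsCompactOperator T) (U : Ultrafilter ι) {u : ι → E} (hu : ∀ i, ‖u i‖ ≤ 1) {x : E}
    (hx : ∀ g : StrongDual ℝ E, Tendsto (fun i => g (u i)) U (𝓝 (g x))) :
    Tendsto (fun i => T (u i)) U (𝓝 (T x)) := by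
  obtain ⟨K, hK, hTK⟩ := IsCompactOperator.image_closedBall_subset_compact
    (f := T.toLinearMap) hT 1
  obtain ⟨z, -, hz⟩ := hK.ultrafilter_le_nhds (U.map fun i => T (u i)) (by
    exact tendsto_principal.2 <| Eventually.of_forall fun i => hTK ⟨u i, by simpa using hu i, rfl⟩)
  have hz' : Tendsto (fun i => T (u i)) U (𝓝 z) := hz
  have hzx : z = T x := (SeparatingDual.eq_iff_forall_dual_eq (R := ℝ)).2 fun g =>
    tendsto_nhds_unique ((g.continuous.tendsto z).comp hz') (hx (g.comp T))
  rwa [hzx] at hz'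

/-- In a strictly convex space a functional of norm at most one takes the value one at no more than
one point of the unit ball. -/
lemma eq_of_functional_eq_one {E : Type*} [NormedAddCommGroup E] [NormedSpace ℝ E]
    [StrictConvexSpace ℝ E] {f : StrongDual ℝ E} (hf : ‖f‖ ≤ 1) {x y : E} (hx : ‖x‖ ≤ 1)
    (hy : ‖y‖ ≤ 1) (hfx : f x = 1) (hfy : f y = 1) : x = y := by
  by_contra hne
  have hlt := norm_combo_lt_of_ne hx hy hne (a := 1 / 2) (b := 1 / 2) (by norm_num) (by norm_num)
    (by norm_num)
  have hle := (le_abs_self _).trans (f.le_of_opNorm_le hf ((1 / 2 : ℝ) • x + (1 / 2 : ℝ) • y))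
  simp only [map_add, map_smul, hfx, hfy, smul_eq_mul] at hle
  linarith

/-- If `f` norms the unit vector `y` and the rank-one operator `f ⊗ T y` is Birkhoff–James orthogonal
to the compact operator `T`, then `T y = 0`. -/
lemma eq_zero_of_bjOrth_smulRight {X Y : Type*} [NormedAddCommGroup X] [NormedSpace ℝ X]
    [StrictConvexSpace ℝ X] [NormedAddCommGroup Y] [NormedSpace ℝ Y] (hX : ReflexiveSp X)
    {T : X →L[ℝ] Y} (hT : IsCompactOperator T) {f : StrongDual ℝ X} (hf : ‖f‖ ≤ 1) {y : X}
    (hy : ‖y‖ = 1) (hfy : f y = 1) (hA : BJOrth (f.smulRight (T y)) T) : T y = 0 := by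
  by_contra hne
  have hpos : 0 < ‖T y‖ := norm_pos_iff.2 hne
  have hAnorm : ‖T y‖ ≤ ‖f.smulRight (T y)‖ := by
    simpa [hfy, hy] using (f.smulRight (T y)).le_opNorm y
  let t : ℕ → ℝ := fun n => 1 / ((n : ℝ) + 1)
  have ht (n : ℕ) : 0 < t n := Nat.one_div_pos_of_nat
  have htlim : Tendsto t atTop (𝓝 0) := tendsto_one_div_add_atTop_nhds_zero_nat
  have hex (n : ℕ) : ∃ x : X, ‖x‖ ≤ 1 ∧ 0 ≤ f x ∧
      ‖T y‖ - t n ^ 2 < ‖f x • T y - t n • T x‖ := by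
    have hlt : ‖T y‖ - t n ^ 2 < ‖f.smulRight (T y) + (-t n) • T‖ := by
      have := hA (-t n)
      have := pow_pos (ht n) 2
      linarith
    obtain ⟨x, hx, hxlt⟩ := ContinuousLinearMap.exists_lt_apply_of_lt_opNorm _ hlt
    have hxlt' : ‖T y‖ - t n ^ 2 < ‖f x • T y - t n • T x‖ := by
      simpa [sub_eq_add_neg] using hxlt
    rcases le_total 0 (f x) with h0 | h0
    · exact ⟨x, hx.le, h0, hxlt'⟩
    · refine ⟨-x, by simpa using hx.le, by simpa using h0, ?_⟩
      have hsign : f (-x) • T y - t n • T (-x) = -(f x • T y - t n • T x) := by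
        simp only [map_neg, neg_smul, smul_neg]
        abel
      rwa [hsign, norm_neg]
  choose u hu hfu hlow using hex
  let U : Ultrafilter ℕ := hyperfilter ℕ
  have hU : (U : Filter ℕ) ≤ atTop := by
    rw [← Nat.cofinite_eq_atTop]
    exact hyperfilter_le_cofinite
  obtain ⟨x, hx, hlim⟩ := hX.exists_weak_limit_s5 U hu
  have hTlim := hT.tendsto_of_weak_tendsto U hu hlim
  have htU : Tendsto t U (𝓝 0) := htlim.mono_left hU
  have hfx : f x = 1 := by
    refine le_antisymm ?_ ?_
    · exact (le_abs_self _).trans ((f.le_of_opNorm_le hf x).trans (by linarith))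
    · have hR : Tendsto (fun n => ‖f (u n) • T y - t n • T (u n)‖) U
          (𝓝 ‖f x • T y - (0 : ℝ) • T x‖) :=
        (((hlim f).smul_const (T y)).sub (htU.smul hTlim)).norm
      have hL : Tendsto (fun n => ‖T y‖ - t n ^ 2) U (𝓝 (‖T y‖ - 0 ^ 2)) :=
        tendsto_const_nhds.sub (htU.pow 2)
      have hle := le_of_tendsto_of_tendsto' hL hR fun n => (hlow n).le
      have h0 : 0 ≤ f x := ge_of_tendsto' (hlim f) hfu
      simp only [zero_smul, sub_zero, norm_smul, Real.norm_eq_abs, abs_of_nonneg h0, ne_eq,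
        OfNat.ofNat_ne_zero, not_false_eq_true, zero_pow] at hle
      exact (le_mul_iff_one_le_left hpos).1 hle
  obtain rfl : x = y := eq_of_functional_eq_one hf hx hy.le hfx hfy
  have hev : ∀ᶠ n in U, ‖T x‖ ≤ t n + ‖T x - T (u n)‖ := by
    filter_upwards [htU.eventually_lt (hlim f) (by rw [hfx]; exact one_pos)] with n hn
    have hfu1 : f (u n) ≤ 1 :=
      (le_abs_self _).trans ((f.le_of_opNorm_le hf (u n)).trans (by linarith [hu n]))
    have hsplit : f (u n) • T x - t n • T (u n) =
        (f (u n) - t n) • T x + t n • (T x - T (u n)) := by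
      module
    have hup : ‖f (u n) • T x - t n • T (u n)‖ ≤
        (f (u n) - t n) * ‖T x‖ + t n * ‖T x - T (u n)‖ := by
      rw [hsplit]
      refine (norm_add_le _ _).trans_eq ?_
      rw [norm_smul, norm_smul, Real.norm_of_nonneg (sub_pos.2 hn).le,
        Real.norm_of_nonneg (ht n).le]
    refine le_of_mul_le_mul_left ?_ (ht n)
    nlinarith [hlow n, mul_le_mul_of_nonneg_right hfu1 hpos.le]
  have hlim0 : Tendsto (fun n => t n + ‖T x - T (u n)‖) U (𝓝 (0 + ‖T x - T x‖)) :=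
    htU.add (tendsto_const_nhds.sub hTlim).norm
  have := ge_of_tendsto hlim0 hev
  simp only [sub_self, norm_zero, add_zero] at this
  linarith

theorem left_symmetric_operator_vanishes_on_orthogonal
    {X Y : Type*} [NormedAddCommGroup X] [NormedSpace ℝ X]
    [StrictConvexSpace ℝ X] [CompleteSpace X]
    [NormedAddCommGroup Y] [NormedSpace ℝ Y]
    (hrefl : ReflexiveSp X)
    (T : X →L[ℝ] Y) (hTcpt : IsCompactOperator T)
    (hTsym : LeftSymPt T) (hTnorm : ‖T‖ = 1)
    (x₁ : X) (hx₁ : x₁ ∈ normAttain T)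
    (y : X) (hy : ‖y‖ = 1) (hyx : BJOrth y x₁) :
    T y = 0 := by
  obtain ⟨f, hf, hfy, hfx⟩ := hyx.exists_functional
  rw [hy] at hfy
  refine eq_zero_of_bjOrth_smulRight hrefl hTcpt hf hy hfy (hTsym _ fun t => ?_)
  simpa [hfx, hx₁.1, hx₁.2] using (T + t • f.smulRight (T y)).le_opNorm x₁
end

section
/- Let X and Y be real normed linear spaces with X strictly convex, reflexive and complete, and let T : X → Y be a compact bounded linear operator that is left symmetric in the operator space with ‖T‖ = 1. If M_T ≠ ∅, then the range of T is one-dimensional, i.e., there exist a unit vector w ∈ Y and a continuous linear functional f on X with ‖f‖ = 1 such that Tx = f(x)·w for all x ∈ X. -/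
open Filter Topology Set

/-- In a reflexive space every ultrafilter on the closed unit ball converges weakly to a point of
the closed unit ball. -/
theorem ReflexiveSp.exists_weak_limit_s10 {X : Type*} [NormedAddCommGroup X] [NormedSpace ℝ X]
    (hrefl : ReflexiveSp X) (U : Ultrafilter X) (hU : Metric.closedBall (0 : X) 1 ∈ U) :
    ∃ v : X, ‖v‖ ≤ 1 ∧ ∀ f : X →L[ℝ] ℝ, Tendsto f U (𝓝 (f v)) := by
  let J : X → WeakDual ℝ (StrongDual ℝ X) := fun x =>
    StrongDual.toWeakDual (NormedSpace.inclusionInDoubleDual ℝ X x)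
  have hmem : WeakDual.toStrongDual ⁻¹'
      Metric.closedBall (0 : StrongDual ℝ (StrongDual ℝ X)) 1 ∈ U.map J := by
    refine Ultrafilter.mem_map.2 (mem_of_superset hU fun x hx => ?_)
    have hx' : ‖x‖ ≤ 1 := by simpa using hx
    have hJ : ‖NormedSpace.inclusionInDoubleDual ℝ X x‖ ≤ 1 :=
      (NormedSpace.double_dual_bound ℝ X x).trans hx'
    exact (mem_closedBall_zero_iff (E := StrongDual ℝ (StrongDual ℝ X))).2 hJ
  obtain ⟨φ, hφ, hlim⟩ := (WeakDual.isCompact_closedBall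
    (𝕜 := ℝ) (E := StrongDual ℝ X) 0 1).ultrafilter_le_nhds _ (le_principal_iff.2 hmem)
  obtain ⟨v, hv⟩ := hrefl (WeakDual.toStrongDual φ)
  refine ⟨v, ?_, fun f => ?_⟩
  · have hnorm : ‖NormedSpace.inclusionInDoubleDual ℝ X v‖ ≤ 1 := by
      rw [hv]; simpa using hφ
    have hiso : ‖NormedSpace.inclusionInDoubleDual ℝ X v‖ = ‖v‖ :=
      (NormedSpace.inclusionInDoubleDualLi ℝ (E := X)).norm_map v
    rwa [hiso] at hnorm
  · have hfv : φ f = f v := (DFunLike.congr_fun hv f).symm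
    rw [← hfv]
    exact (WeakDual.eval_continuous f).continuousAt.tendsto.comp
      (show Tendsto J U (𝓝 φ) from hlim)

/-- In a strictly convex space a functional of norm at most one takes the value `1` at no more than
one point of the closed unit ball. -/
theorem eq_of_apply_eq_one {X : Type*} [NormedAddCommGroup X] [NormedSpace ℝ X]
    [StrictConvexSpace ℝ X] {g : X →L[ℝ] ℝ} (hg : ‖g‖ ≤ 1) {u v : X} (hu : ‖u‖ ≤ 1)
    (hv : ‖v‖ ≤ 1) (hgu : g u = 1) (hgv : g v = 1) : u = v := by
  have hle : ∀ x, g x ≤ ‖x‖ := fun x =>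
    (le_abs_self _).trans ((g.le_of_opNorm_le hg x).trans_eq (one_mul _))
  have hu1 := hle u
  have hv1 := hle v
  have huv := hle (u + v)
  rw [map_add] at huv
  have htri := norm_add_le u v
  exact eq_of_norm_eq_of_norm_add_eq (by linarith) (by linarith)

/-- If `g` attains its norm at `u`, then a compact operator on a strictly convex reflexive space
sends the slices of the unit ball cut out by `g` to sets shrinking to the image of `u`. -/
theorem IsCompactOperator.tendsto_of_slices {X Y : Type*} [NormedAddCommGroup X] [NormedSpace ℝ X]
    [StrictConvexSpace ℝ X] [NormedAddCommGroup Y] [NormedSpace ℝ Y] (hrefl : ReflexiveSp X)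
    {T : X →L[ℝ] Y} (hT : IsCompactOperator T) {g : X →L[ℝ] ℝ} (hg : ‖g‖ ≤ 1) {u : X}
    (hu : ‖u‖ ≤ 1) (hgu : g u = 1) :
    Tendsto T (comap g (𝓝 1) ⊓ 𝓟 (Metric.closedBall 0 1)) (𝓝 (T u)) := by
  rw [tendsto_iff_ultrafilter]
  intro U hU
  obtain ⟨hU1, hU2⟩ := le_inf_iff.1 hU
  rw [le_principal_iff] at hU2
  obtain ⟨v, hv, hlim⟩ := hrefl.exists_weak_limit_s10 U hU2
  obtain rfl : u = v := eq_of_apply_eq_one hg hu hv hgu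
    (tendsto_nhds_unique (hlim g) (tendsto_iff_comap.2 hU1))
  obtain ⟨K, hK, hKT⟩ := IsCompactOperator.image_closedBall_subset_compact
    (f := (T : X →ₗ[ℝ] Y)) hT 1
  obtain ⟨y, -, hy⟩ := hK.ultrafilter_le_nhds (U.map T)
    (le_principal_iff.2 (Ultrafilter.mem_map.2 (mem_of_superset hU2 (image_subset_iff.1 hKT))))
  have hyT : Tendsto T U (𝓝 y) := hy
  obtain rfl : y = T u := (SeparatingDual.eq_iff_forall_dual_eq (R := ℝ)).2 fun h =>
    tendsto_nhds_unique ((h.continuous.tendsto y).comp hyT) (hlim (h.comp T))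
  exact hyT

/-- The vector `x` can be translated along `z` to a vector that is Birkhoff–James orthogonal
to `z`. -/
theorem exists_bjOrth_add_smul_s10 {E : Type*} [NormedAddCommGroup E] [NormedSpace ℝ E] (x : E) {z : E}
    (hz : z ≠ 0) : ∃ a : ℝ, BJOrth (x + a • z) z := by
  have hcont : Continuous fun a : ℝ => ‖x + a • z‖ := by fun_prop
  have hcoe : Tendsto (fun a : ℝ => ‖x + a • z‖) (cocompact ℝ) atTop := by
    have h1 : Tendsto (fun a : ℝ => ‖a‖ * ‖z‖ + -‖x‖) (cocompact ℝ) atTop :=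
      tendsto_atTop_add_const_right _ _
        ((tendsto_norm_cocompact_atTop (E := ℝ)).atTop_mul_const (norm_pos_iff.2 hz))
    refine tendsto_atTop_mono (fun a => ?_) h1
    have h2 := norm_sub_le (x + a • z) x
    rw [add_sub_cancel_left, norm_smul] at h2
    linarith
  obtain ⟨a, ha⟩ := hcont.exists_forall_le hcoe
  refine ⟨a, fun t => ?_⟩
  simpa [add_smul, add_assoc] using ha (a + t)

/-- If `x` is orthogonal to `z`, some norming functional of `x`
vanishes at `z`. -/
theorem BJOrth.exists_dual {E : Type*} [NormedAddCommGroup E] [NormedSpace ℝ E] {x z : E}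
    (h : BJOrth x z) (hx : x ≠ 0) : ∃ g : E →L[ℝ] ℝ, ‖g‖ = 1 ∧ g x = ‖x‖ ∧ g z = 0 := by
  let S := Submodule.span ℝ {z}
  have hS : IsClosed (S : Set E) := S.closed_of_finiteDimensional
  have hle : ∀ y : E, ‖S.mkQL y‖ ≤ ‖y‖ := fun y => Submodule.Quotient.norm_mk_le S y
  have hnorm : ‖S.mkQL x‖ = ‖x‖ := by
    refine (hle x).antisymm (QuotientAddGroup.le_norm_iff.2 fun m hm => ?_)
    have hmem : m - x ∈ S := (Submodule.Quotient.eq S).1 hm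
    obtain ⟨t, ht⟩ := Submodule.mem_span_singleton.1 hmem
    simpa [ht] using h t
  obtain ⟨φ, hφ, hφx⟩ := exists_dual_vector ℝ (S.mkQL x)
    (by rw [hnorm]; exact norm_ne_zero_iff.2 hx)
  have hgx : (φ.comp S.mkQL) x = ‖x‖ := by
    rw [ContinuousLinearMap.comp_apply, hφx, hnorm]; rfl
  refine ⟨φ.comp S.mkQL, le_antisymm ?_ ?_, hgx, ?_⟩
  · refine ContinuousLinearMap.opNorm_le_bound _ zero_le_one fun y => ?_
    exact (φ.le_of_opNorm_le hφ.le _).trans (by simpa using hle y)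
  · have h1 := (φ.comp S.mkQL).le_opNorm x
    rw [hgx, norm_norm] at h1
    exact le_of_mul_le_mul_right (by simpa using h1) (norm_pos_iff.2 hx)
  · have h0 : S.mkQL z = 0 :=
      (Submodule.Quotient.mk_eq_zero S).2 (Submodule.mem_span_singleton_self z)
    rw [ContinuousLinearMap.comp_apply, h0, map_zero]

/-- If `g` attains its norm at the unit vector `u` and `T` is a compact contraction with `T u ≠ 0`,
then the rank one operator `g ⊗ T u` is not orthogonal to `T`. -/
theorem not_bjOrth_smulRight {X Y : Type*} [NormedAddCommGroup X] [NormedSpace ℝ X]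
    [StrictConvexSpace ℝ X] [NormedAddCommGroup Y] [NormedSpace ℝ Y] (hrefl : ReflexiveSp X)
    {T : X →L[ℝ] Y} (hT : IsCompactOperator T) (hTnorm : ‖T‖ ≤ 1) {g : X →L[ℝ] ℝ} (hg : ‖g‖ = 1)
    {u : X} (hu : ‖u‖ = 1) (hgu : g u = 1) (hTu : T u ≠ 0) :
    ¬ BJOrth (g.smulRight (T u)) T := by
  intro horth
  set z := T u
  have hzpos : 0 < ‖z‖ := norm_pos_iff.2 hTu
  have hTle : ∀ x : X, ‖x‖ = 1 → ‖T x‖ ≤ 1 := fun x hx =>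
    (T.le_of_opNorm_le hTnorm x).trans_eq (by rw [hx, one_mul])
  have hgle : ∀ x : X, ‖x‖ = 1 → |g x| ≤ 1 := fun x hx =>
    (g.le_of_opNorm_le hg.le x).trans_eq (by rw [hx, one_mul])
  have hz1 : ‖z‖ ≤ 1 := hTle u hu
  obtain ⟨δ, hδ, hδ1, hslice⟩ : ∃ δ : ℝ, 0 < δ ∧ δ ≤ 1 / 2 ∧
      ∀ x : X, ‖x‖ = 1 → 1 - δ < g x → ‖T x - z‖ ≤ ‖z‖ / 2 := by
    have hev := (hT.tendsto_of_slices hrefl hg.le hu.le hgu).eventually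
      (Metric.ball_mem_nhds z (half_pos hzpos))
    rw [eventually_inf_principal, ((Metric.nhds_basis_ball (x := (1 : ℝ))).comap g).eventually_iff]
      at hev
    obtain ⟨δ, hδ, h⟩ := hev
    refine ⟨min δ (1 / 2), by positivity, min_le_right _ _, fun x hx hgx => ?_⟩
    have hgx1 := (abs_le.1 (hgle x hx)).2
    have hmin := min_le_left δ (1 / 2)
    have hT := h (x := x) (by
      rw [mem_preimage, Metric.mem_ball, Real.dist_eq, abs_lt]
      constructor <;> linarith) (by simp [hx])
    rw [← dist_eq_norm]
    exact (Metric.mem_ball.1 hT).le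
  set t := δ * ‖z‖ / 2 with ht
  have htpos : 0 < t := by positivity
  have htδ : t ≤ δ / 2 := by rw [ht]; nlinarith
  have hpos : ∀ x : X, ‖x‖ = 1 → 1 - δ < g x → ‖g x • z - t • T x‖ ≤ (1 - t / 2) * ‖z‖ := by
    intro x hx hgx
    have hgx1 := (abs_le.1 (hgle x hx)).2
    have hdecomp : g x • z - t • T x = (g x - t) • z - t • (T x - z) := by module
    have h1 := norm_sub_le ((g x - t) • z) (t • (T x - z))
    rw [norm_smul, norm_smul, Real.norm_of_nonneg htpos.le,
      Real.norm_of_nonneg (by linarith : 0 ≤ g x - t)] at h1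
    rw [hdecomp]
    have h2 := mul_le_mul_of_nonneg_left (hslice x hx hgx) htpos.le
    have h3 : (g x - t) * ‖z‖ ≤ (1 - t) * ‖z‖ := by gcongr
    linarith
  have hall : ∀ x : X, ‖x‖ = 1 → ‖g x • z - t • T x‖ ≤ (1 - t / 2) * ‖z‖ := by
    intro x hx
    rcases lt_or_ge (1 - δ) (g x) with h | h
    · exact hpos x hx h
    rcases lt_or_ge (1 - δ) (g (-x)) with h' | h'
    · have hneg : g (-x) • z - t • T (-x) = -(g x • z - t • T x) := by
        rw [map_neg, map_neg]; module
      rw [← norm_neg, ← hneg]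
      exact hpos (-x) (by rw [norm_neg, hx]) h'
    · rw [map_neg] at h'
      have habs : ‖g x‖ ≤ 1 - δ := abs_le.2 ⟨by linarith, h⟩
      have h1 := norm_sub_le (g x • z) (t • T x)
      rw [norm_smul, norm_smul, Real.norm_of_nonneg htpos.le] at h1
      have h2 := mul_le_mul_of_nonneg_right habs hzpos.le
      have h3 := mul_le_mul_of_nonneg_left (hTle x hx) htpos.le
      have h4 : t / 2 * ‖z‖ ≤ δ / 2 * ‖z‖ := by gcongr; linarith
      linarith
  have hop : ‖g.smulRight z + (-t) • T‖ ≤ (1 - t / 2) * ‖z‖ := by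
    refine ContinuousLinearMap.opNorm_le_of_unit_norm (mul_nonneg (by linarith) hzpos.le)
      fun x hx => ?_
    simpa [sub_eq_add_neg] using hall x hx
  have hlow := horth (-t)
  rw [ContinuousLinearMap.norm_smulRight_apply, hg, one_mul] at hlow
  nlinarith

/-- A left symmetric compact contraction attaining norm one at `x₀` annihilates every vector
orthogonal to `x₀`. -/
theorem LeftSymPt.apply_eq_zero_of_bjOrth {X Y : Type*} [NormedAddCommGroup X] [NormedSpace ℝ X]
    [StrictConvexSpace ℝ X] [NormedAddCommGroup Y] [NormedSpace ℝ Y] (hrefl : ReflexiveSp X)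
    {T : X →L[ℝ] Y} (hTsym : LeftSymPt T) (hT : IsCompactOperator T) (hTnorm : ‖T‖ = 1)
    {x₀ x : X} (hx₀ : x₀ ∈ normAttain T) (hx : BJOrth x x₀) : T x = 0 := by
  by_contra hTx
  have hx0 : x ≠ 0 := by rintro rfl; exact hTx (map_zero T)
  have hxn : ‖x‖ ≠ 0 := norm_ne_zero_iff.2 hx0
  obtain ⟨g, hg, hgx, hgx₀⟩ := hx.exists_dual hx0
  refine not_bjOrth_smulRight hrefl hT hTnorm.le hg (u := ‖x‖⁻¹ • x) ?_ ?_ ?_ (hTsym _ fun t => ?_)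
  · rw [norm_smul, norm_inv, norm_norm, inv_mul_cancel₀ hxn]
  · rw [map_smul, hgx, smul_eq_mul, inv_mul_cancel₀ hxn]
  · rw [map_smul]
    exact smul_ne_zero (inv_ne_zero hxn) hTx
  · have h := (T + t • g.smulRight (T (‖x‖⁻¹ • x))).unit_le_opNorm x₀ hx₀.1.le
    rw [← hx₀.2]
    simpa [hgx₀] using h

theorem left_symmetric_compact_operator_is_rank_one
    {X Y : Type*} [NormedAddCommGroup X] [NormedSpace ℝ X]
    [StrictConvexSpace ℝ X] [CompleteSpace X]
    [NormedAddCommGroup Y] [NormedSpace ℝ Y]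
    (hrefl : ReflexiveSp X)
    (T : X →L[ℝ] Y) (hTcpt : IsCompactOperator T)
    (hTsym : LeftSymPt T) (hTnorm : ‖T‖ = 1)
    (hMT : (normAttain T).Nonempty) :
    ∃ (w : Y) (f : X →L[ℝ] ℝ), ‖w‖ = 1 ∧ ‖f‖ = 1 ∧ ∀ x : X, T x = f x • w := by
  obtain ⟨x₀, hx₀⟩ := hMT
  have hw : ‖T x₀‖ = 1 := hx₀.2.trans hTnorm
  have hx₀0 : x₀ ≠ 0 := norm_ne_zero_iff.1 (by rw [hx₀.1]; exact one_ne_zero)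
  obtain ⟨φ, -, hφ⟩ := exists_dual_vector ℝ (T x₀) (by simp [hw])
  have hφ1 : φ (T x₀) = 1 := by rw [hφ, hw]; rfl
  have hrank : ∀ x : X, T x = (φ.comp T) x • T x₀ := by
    intro x
    obtain ⟨a, ha⟩ := exists_bjOrth_add_smul_s10 x hx₀0
    have h0 := hTsym.apply_eq_zero_of_bjOrth hrefl hTcpt hTnorm hx₀ ha
    rw [map_add, map_smul] at h0
    have hTx : T x = (-a) • T x₀ := by rw [neg_smul]; exact eq_neg_of_add_eq_zero_left h0
    rw [ContinuousLinearMap.comp_apply, hTx, map_smul, hφ1, smul_eq_mul, mul_one]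
  refine ⟨T x₀, φ.comp T, hw, ?_, hrank⟩
  have hTeq : T = (φ.comp T).smulRight (T x₀) := ContinuousLinearMap.ext hrank
  have hnorm := congrArg norm hTeq
  rw [ContinuousLinearMap.norm_smulRight_apply, hw, mul_one, hTnorm] at hnorm
  exact hnorm.symm
end

section
/- Let X and Y be real normed linear spaces with X strictly convex, reflexive and complete. Let T : X → Y be a compact bounded linear operator that is left symmetric in the operator space with ‖T‖ = 1, suppose Tx = f(x)·w for all x, where w ∈ Y is a unit vector and f is a norm-one continuous linear functional on X, and suppose x₁ ∈ M_T. Then x₁ is a right symmetric point of X and w is a left symmetric point of Y. -/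
open Filter Topology Set

/-- The James criterion: if `u ⊥_B v`, some functional in the unit ball of the dual norms `u` and
annihilates `v`. -/
theorem BJOrth.exists_dual_vector {E : Type*} [NormedAddCommGroup E] [NormedSpace ℝ E] {u v : E}
    (h : BJOrth u v) : ∃ g : E →L[ℝ] ℝ, ‖g‖ ≤ 1 ∧ g u = ‖u‖ ∧ g v = 0 := by
  set S : Submodule ℝ E := Submodule.span ℝ {v}
  obtain ⟨φ, hφ, hφu⟩ := exists_dual_vector'' ℝ (Submodule.Quotient.mk u : E ⧸ S)
  have hφ_le (x : E) : ‖φ (Submodule.Quotient.mk x)‖ ≤ ‖x‖ :=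
    (φ.le_of_opNorm_le hφ _).trans <| by simpa using Submodule.Quotient.norm_mk_le S x
  have hu : ‖u‖ ≤ ‖(Submodule.Quotient.mk u : E ⧸ S)‖ := by
    refine QuotientAddGroup.le_norm_iff.2 fun m hm => ?_
    have hmem : m - u ∈ S := (Submodule.Quotient.eq S).1 hm
    obtain ⟨t, ht⟩ := Submodule.mem_span_singleton.1 hmem
    simpa [ht] using h t
  refine ⟨φ.comp S.mkQL, ?_, ?_, ?_⟩
  · exact ContinuousLinearMap.opNorm_le_bound _ zero_le_one fun x => by simpa using hφ_le x
  · have heq := hu.antisymm (Submodule.Quotient.norm_mk_le S u)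
    simpa [heq] using hφu
  · have hv : (Submodule.Quotient.mk v : E ⧸ S) = 0 :=
      (Submodule.Quotient.mk_eq_zero S).2 (Submodule.mem_span_singleton_self v)
    simp [hv]

/-- A vector normed by a functional `φ` of norm at most one is orthogonal to the kernel of `φ`. -/
theorem BJOrth.of_norming_functional {E : Type*} [NormedAddCommGroup E] [NormedSpace ℝ E]
    {u v : E} {φ : E →L[ℝ] ℝ} (hφ : ‖φ‖ ≤ 1) (hu : ‖φ u‖ = ‖u‖) (hv : φ v = 0) : BJOrth u v := by
  intro t
  simpa [hv, ← hu] using φ.le_of_opNorm_le hφ (u + t • v)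

/-- In a strictly convex space, vectors normed by a common functional lie on a common ray. -/
theorem sameRay_of_norming_functional {E : Type*} [NormedAddCommGroup E] [NormedSpace ℝ E]
    [StrictConvexSpace ℝ E] {y z : E} {g : E →L[ℝ] ℝ} (hg : ‖g‖ ≤ 1)
    (hy : g y = ‖y‖) (hz : g z = ‖z‖) : SameRay ℝ y z := by
  refine sameRay_iff_norm_add.2 ((norm_add_le y z).antisymm ?_)
  have hle := (le_abs_self _).trans (g.le_of_opNorm_le hg (y + z))
  simpa [hy, hz] using hle

/-- Rank one operators with a common range vector are orthogonal iff their functionals are. -/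
theorem bjOrth_smulRight_left_iff {X Y : Type*} [NormedAddCommGroup X] [NormedSpace ℝ X]
    [NormedAddCommGroup Y] [NormedSpace ℝ Y] {w : Y} (hw : ‖w‖ = 1) (f g : X →L[ℝ] ℝ) :
    BJOrth (f.smulRight w) (g.smulRight w) ↔ BJOrth f g := by
  have h (t : ℝ) : f.smulRight w + t • g.smulRight w = (f + t • g).smulRight w := by
    ext x; simp [add_smul, mul_smul]
  simp [BJOrth, h, ContinuousLinearMap.norm_smulRight_apply, hw]

/-- Rank one operators with a common functional are orthogonal iff their range vectors are. -/
theorem bjOrth_smulRight_right_iff {X Y : Type*} [NormedAddCommGroup X] [NormedSpace ℝ X]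
    [NormedAddCommGroup Y] [NormedSpace ℝ Y] {f : X →L[ℝ] ℝ} (hf : ‖f‖ = 1) (v w : Y) :
    BJOrth (f.smulRight v) (f.smulRight w) ↔ BJOrth v w := by
  have h (t : ℝ) : f.smulRight v + t • f.smulRight w = f.smulRight (v + t • w) := by
    ext x; simp [smul_comm t]
  simp [BJOrth, h, ContinuousLinearMap.norm_smulRight_apply, hf]

/-- In a reflexive strictly convex space, if `g` norms `y` and `g ⊥_B f` then `f` vanishes
at `y`. -/
theorem BJOrth.apply_eq_zero_of_norming {X : Type*} [NormedAddCommGroup X] [NormedSpace ℝ X]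
    [StrictConvexSpace ℝ X] (hrefl : ReflexiveSp X) {f g : X →L[ℝ] ℝ} (h : BJOrth g f)
    (hg : ‖g‖ = 1) {y : X} (hy : g y = ‖y‖) : f y = 0 := by
  obtain ⟨G, hG, hGg, hGf⟩ := h.exists_dual_vector
  obtain ⟨z, rfl⟩ := hrefl G
  rw [NormedSpace.dual_def] at hGg hGf
  have hz_le : ‖z‖ ≤ 1 := by
    rwa [← (NormedSpace.inclusionInDoubleDualLi ℝ (E := X)).norm_map z]
  have hz : ‖z‖ = 1 := by
    refine hz_le.antisymm ?_
    have hle := g.le_opNorm z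
    simpa [hGg, hg] using hle
  have hz0 : z ≠ 0 := norm_ne_zero_iff.1 (by simp [hz])
  obtain ⟨r, -, rfl⟩ :=
    (sameRay_of_norming_functional hg.le hy (by rw [hGg, hg, hz])).exists_nonneg_right hz0
  simp [hGf]

theorem rank_one_left_symmetric_operator_symmetric_points
    {X Y : Type*} [NormedAddCommGroup X] [NormedSpace ℝ X]
    [StrictConvexSpace ℝ X] [CompleteSpace X]
    [NormedAddCommGroup Y] [NormedSpace ℝ Y]
    (hrefl : ReflexiveSp X)
    (T : X →L[ℝ] Y) (hTcpt : IsCompactOperator T)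
    (hTsym : LeftSymPt T) (hTnorm : ‖T‖ = 1)
    (w : Y) (hw : ‖w‖ = 1) (f : X →L[ℝ] ℝ) (hf : ‖f‖ = 1)
    (hTrank : ∀ x : X, T x = f x • w)
    (x₁ : X) (hx₁ : x₁ ∈ normAttain T) :
    RightSymPt x₁ ∧ LeftSymPt w := by
  obtain rfl : T = f.smulRight w := by ext x; simp [hTrank]
  obtain ⟨hx, hTx⟩ := hx₁
  have hfx : ‖f x₁‖ = 1 := by simpa [norm_smul, hw, hf] using hTx
  refine ⟨fun y hy => ?_, fun y hy => ?_⟩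
  · rcases eq_or_ne y 0 with rfl | hy0
    · simp [BJOrth]
    obtain ⟨g, hg_le, hgy, hgx⟩ := hy.exists_dual_vector
    have hg : ‖g‖ = 1 := by
      refine hg_le.antisymm ?_
      have hle := g.le_opNorm y
      rw [hgy, norm_norm] at hle
      exact (le_mul_iff_one_le_left (norm_pos_iff.2 hy0)).1 hle
    have hfg : BJOrth f g := fun t => by
      simpa [hgx, hfx, hx, hf] using (f + t • g).le_opNorm x₁
    have hgf : BJOrth g f := (bjOrth_smulRight_left_iff hw g f).1 <|
      hTsym _ <| (bjOrth_smulRight_left_iff hw f g).2 hfg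
    exact .of_norming_functional hf.le (hfx.trans hx.symm)
      (hgf.apply_eq_zero_of_norming hrefl hg hgy)
  · exact (bjOrth_smulRight_right_iff hf y w).1 <|
      hTsym _ <| (bjOrth_smulRight_right_iff hf w y).2 hy
end

section
/- Let X and Y be real reflexive Banach spaces with Y smooth (every unit vector of Y is a smooth point). Let T : X → Y be a compact bounded linear operator that is left symmetric in the operator space with ‖T‖ = 1. Then there exist a unit vector w ∈ Y and a norm-one continuous linear functional f on X such that Tx = f(x)·w for all x ∈ X, and w is a left symmetric point of Y. -/
open Filter Topology Set

/-- A functional on a reflexive space attains its norm on the closed unit ball. -/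
theorem ReflexiveSp.exists_apply_eq_norm {E : Type*} [NormedAddCommGroup E] [NormedSpace ℝ E]
    (hE : ReflexiveSp E) (f : E →L[ℝ] ℝ) : ∃ x : E, ‖x‖ ≤ 1 ∧ f x = ‖f‖ := by
  obtain ⟨F, hF, hFf⟩ := exists_dual_vector'' ℝ f
  obtain ⟨x, rfl⟩ := hE F
  refine ⟨x, ?_, by simpa using hFf⟩
  rwa [← (NormedSpace.inclusionInDoubleDualLi ℝ (E := E)).norm_map x]

/-- Functionals in the closed unit ball of the dual have a pointwise limit along any
ultrafilter, which is again in the closed unit ball. -/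
theorem exists_pointwise_limit_of_norm_le_one {E ι : Type*} [NormedAddCommGroup E]
    [NormedSpace ℝ E] (U : Ultrafilter ι) (h : ι → E →L[ℝ] ℝ) (hh : ∀ i, ‖h i‖ ≤ 1) :
    ∃ g : E →L[ℝ] ℝ, ‖g‖ ≤ 1 ∧ ∀ x, Tendsto (fun i => h i x) U (𝓝 (g x)) := by
  have hK := WeakDual.isCompact_closedBall (𝕜 := ℝ) (0 : StrongDual ℝ E) 1
  obtain ⟨g, hg, hlim⟩ := isCompact_iff_ultrafilter_le_nhds.mp hK
    (U.map fun i => StrongDual.toWeakDual (h i))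
    (by
      rw [Ultrafilter.coe_map, le_principal_iff, mem_map]
      exact univ_mem' fun i => by simpa using hh i)
  refine ⟨WeakDual.toStrongDual g, by simpa using hg, fun x => ?_⟩
  exact ((WeakDual.eval_continuous (𝕜 := ℝ) (E := E) x).tendsto g).comp hlim

/-- A compact operator on a reflexive space attains its norm, as witnessed by a functional. -/
theorem exists_norm_attaining_of_isCompactOperator {X Y : Type*}
    [NormedAddCommGroup X] [NormedSpace ℝ X] [NormedAddCommGroup Y] [NormedSpace ℝ Y]
    (hX : ReflexiveSp X) (T : X →L[ℝ] Y) (hT : IsCompactOperator T) :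
    ∃ (x : X) (g : Y →L[ℝ] ℝ), ‖x‖ ≤ 1 ∧ ‖g‖ ≤ 1 ∧ g (T x) = ‖T‖ := by
  have hK : IsCompact (closure (T '' Metric.closedBall 0 1)) :=
    hT.isCompact_closure_image_closedBall 1
  obtain ⟨w, hw, hmax⟩ := hK.exists_isMaxOn
    (⟨0, subset_closure ⟨0, by simp, by simp⟩⟩) continuous_norm.continuousOn
  have hTw : ‖T‖ ≤ ‖w‖ := by
    refine T.opNorm_le_of_unit_norm (norm_nonneg _) fun x hx => ?_
    exact hmax (subset_closure ⟨x, by simp [hx], rfl⟩)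
  obtain ⟨g, hg, hgw⟩ := exists_dual_vector'' ℝ w
  obtain ⟨x, hx, hgx⟩ := hX.exists_apply_eq_norm (g.comp T)
  have hle : g w ≤ ‖g.comp T‖ := by
    refine closure_minimal ?_ (isClosed_le g.continuous continuous_const) hw
    rintro _ ⟨z, hz, rfl⟩
    exact (le_abs_self _).trans ((g.comp T).unit_le_opNorm z (by simpa using hz))
  refine ⟨x, g, hx, hg, le_antisymm ?_ ?_⟩
  · calc g (T x) = ‖g.comp T‖ := hgx
      _ ≤ ‖g‖ * ‖T‖ := g.opNorm_comp_le T
      _ ≤ ‖T‖ := mul_le_of_le_one_left (norm_nonneg _) hg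
  · have hgw' : g w = ‖w‖ := by simpa using hgw
    have hgx' : g (T x) = ‖g.comp T‖ := hgx
    linarith

/-- If `ψ` is the norming functional of a smooth point `y` and `T` is compact, the rank one
operator `x ↦ ψ (T x) • y` is orthogonal to `T` only when `ψ ∘ T = 0`. -/
theorem SmoothPt.comp_eq_zero_of_bjOrth {X Y : Type*}
    [NormedAddCommGroup X] [NormedSpace ℝ X] [NormedAddCommGroup Y] [NormedSpace ℝ Y]
    {T : X →L[ℝ] Y} (hT : IsCompactOperator T) {y : Y} (hy : ‖y‖ = 1) (hsm : SmoothPt y)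
    {ψ : Y →L[ℝ] ℝ} (hψ : ‖ψ‖ = 1) (hψy : ψ y = 1)
    (horth : BJOrth ((ψ.comp T).smulRight y) T) : ψ.comp T = 0 := by
  by_contra hne
  set φ := ψ.comp T
  have hφpos : 0 < ‖φ‖ := norm_pos_iff.mpr hne
  let t : ℕ → ℝ := fun n => 1 / ((n : ℝ) + 1)
  have ht : ∀ n, 0 < t n := fun n => by positivity
  have htlim : Tendsto t atTop (𝓝 0) := tendsto_one_div_add_atTop_nhds_zero_nat
  have key : ∀ n, ∃ x : X, ∃ h : Y →L[ℝ] ℝ, ‖x‖ ≤ 1 ∧ ‖h‖ ≤ 1 ∧ 0 ≤ φ x ∧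
      ‖φ‖ - t n ^ 2 < φ x * h y - t n * h (T x) := by
    intro n
    have h1 : ‖φ‖ - t n ^ 2 < ‖φ.smulRight y + (-t n) • T‖ := by
      have h2 := horth (-t n)
      rw [ContinuousLinearMap.norm_smulRight_apply, hy, mul_one] at h2
      have := pow_pos (ht n) 2
      linarith
    obtain ⟨x, hx, hxn⟩ := ContinuousLinearMap.exists_lt_apply_of_lt_opNorm _ h1
    wlog hpos : 0 ≤ φ x generalizing x
    · refine this (-x) (by simpa using hx) ?_ (by rw [map_neg]; linarith)
      rwa [map_neg, norm_neg]
    obtain ⟨h, hh, hhx⟩ := exists_dual_vector'' ℝ ((φ.smulRight y + (-t n) • T) x)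
    refine ⟨x, h, hx.le, hh, hpos, ?_⟩
    have : φ x * h y - t n * h (T x) = ‖(φ.smulRight y + (-t n) • T) x‖ := by
      have hhx' : h ((φ.smulRight y + (-t n) • T) x) = ‖(φ.smulRight y + (-t n) • T) x‖ := hhx
      rw [← hhx']
      simp
      ring
    rwa [this]
  choose x h hx hh hpos hlt using key
  let U : Ultrafilter ℕ := hyperfilter ℕ
  have hU : (U : Filter ℕ) ≤ atTop := Nat.hyperfilter_le_atTop
  obtain ⟨z, -, hz⟩ := isCompact_iff_ultrafilter_le_nhds.mp
    (hT.isCompact_closure_image_closedBall 1) (U.map fun n => T (x n))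
    (by
      rw [Ultrafilter.coe_map, le_principal_iff, mem_map]
      exact univ_mem' fun n => subset_closure ⟨x n, by simpa using hx n, rfl⟩)
  have hz : Tendsto (fun n => T (x n)) U (𝓝 z) := hz
  obtain ⟨g, hg, hglim⟩ := exists_pointwise_limit_of_norm_le_one U h hh
  have htU : Tendsto t U (𝓝 0) := htlim.mono_left hU
  have hφlim : Tendsto (fun n => φ (x n)) U (𝓝 (ψ z)) := (ψ.continuous.tendsto z).comp hz
  have hhT : Tendsto (fun n => h n (T (x n))) U (𝓝 (g z)) := by
    have h0 : Tendsto (fun n => h n (T (x n) - z)) U (𝓝 0) := by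
      refine squeeze_zero_norm (fun n => (h n).le_of_opNorm_le (hh n) _) ?_
      simpa using (hz.sub_const z).norm
    simpa using h0.add (hglim z)
  have hφle : ∀ n, φ (x n) ≤ ‖φ‖ := fun n =>
    (le_abs_self _).trans (φ.unit_le_opNorm _ (hx n))
  have hhy : ∀ n, h n y ≤ 1 := fun n =>
    (le_abs_self _).trans (((h n).unit_le_opNorm y hy.le).trans (hh n))
  have hs0 : 0 ≤ ψ z := ge_of_tendsto' hφlim hpos
  have hs1 : ψ z ≤ ‖φ‖ := le_of_tendsto' hφlim hφle
  have hgy : g y ≤ 1 := le_of_tendsto' (hglim y) hhy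
  have hlim : ‖φ‖ ≤ ψ z * g y := by
    have := le_of_tendsto_of_tendsto' (tendsto_const_nhds.sub (htU.pow 2))
      ((hφlim.mul (hglim y)).sub (htU.mul hhT)) fun n => (hlt n).le
    simpa using this
  have hgz : g z ≤ 0 := by
    refine le_of_tendsto_of_tendsto' hhT htU fun n => ?_
    have h1 : φ (x n) * h n y ≤ ‖φ‖ :=
      (mul_le_of_le_one_right (hpos n) (hhy n)).trans (hφle n)
    have h2 : t n * h n (T (x n)) ≤ t n * t n := by nlinarith [hlt n]
    exact le_of_mul_le_mul_left h2 (ht n)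
  have hzpos : 0 < ψ z := hs0.lt_of_ne fun h0 => by
    rw [← h0, zero_mul] at hlim
    linarith
  have hgy1 : g y = 1 :=
    le_antisymm hgy (le_of_mul_le_mul_left (by linarith : ψ z * 1 ≤ ψ z * g y) hzpos)
  have hgnorm : ‖g‖ = 1 := by
    refine le_antisymm hg ?_
    have := g.unit_le_opNorm y hy.le
    rwa [hgy1, norm_one] at this
  have hgψ : g = ψ := hsm.unique ⟨hgnorm, hgy1⟩ ⟨hψ, hψy⟩
  rw [hgψ] at hgz
  linarith

/-- A left symmetric compact operator into a smooth reflexive space annihilates, after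
composition, every functional vanishing at the image of a norm attaining vector. -/
theorem LeftSymPt.comp_eq_zero_of_apply_eq_zero {X Y : Type*}
    [NormedAddCommGroup X] [NormedSpace ℝ X] [NormedAddCommGroup Y] [NormedSpace ℝ Y]
    (hY : ReflexiveSp Y) (hsm : ∀ y : Y, ‖y‖ = 1 → SmoothPt y)
    {T : X →L[ℝ] Y} (hT : IsCompactOperator T) (hsym : LeftSymPt T)
    {x₀ : X} (hx₀ : ‖x₀‖ ≤ 1) (hTx₀ : ‖T x₀‖ = ‖T‖)
    {ψ : Y →L[ℝ] ℝ} (hψ : ψ (T x₀) = 0) : ψ.comp T = 0 := by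
  wlog hψ1 : ‖ψ‖ = 1 generalizing ψ
  · rcases eq_or_ne ψ 0 with rfl | hne
    · simp
    have hn : ‖ψ‖ ≠ 0 := norm_ne_zero_iff.mpr hne
    have := this (ψ := ‖ψ‖⁻¹ • ψ) (by simp [hψ])
      (by rw [norm_smul, norm_inv, norm_norm, inv_mul_cancel₀ hn])
    rw [ContinuousLinearMap.smul_comp] at this
    exact (smul_eq_zero.mp this).resolve_left (inv_ne_zero hn)
  obtain ⟨y, hy, hψy⟩ := hY.exists_apply_eq_norm ψ
  rw [hψ1] at hψy
  have hy1 : ‖y‖ = 1 := by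
    refine le_antisymm hy ?_
    have := ψ.le_opNorm y
    rwa [hψy, hψ1, one_mul, norm_one] at this
  refine (hsm y hy1).comp_eq_zero_of_bjOrth hT hy1 hψ1 hψy (hsym _ fun t => ?_)
  have := (T + t • (ψ.comp T).smulRight y).unit_le_opNorm x₀ hx₀
  simpa [hψ, hTx₀] using this

/-- If a rank one operator is left symmetric, so is the vector spanning its range. -/
theorem LeftSymPt.of_smulRight {X Y : Type*}
    [NormedAddCommGroup X] [NormedSpace ℝ X] [NormedAddCommGroup Y] [NormedSpace ℝ Y]
    {f : X →L[ℝ] ℝ} (hf : f ≠ 0) {w : Y} (hsym : LeftSymPt (f.smulRight w)) :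
    LeftSymPt w := by
  have hpos : 0 < ‖f‖ := norm_pos_iff.mpr hf
  have hiff : ∀ a b : Y, BJOrth (f.smulRight a) (f.smulRight b) ↔ BJOrth a b := by
    refine fun a b => forall_congr' fun t => ?_
    have : f.smulRight a + t • f.smulRight b = f.smulRight (a + t • b) := by
      ext x
      simp [smul_comm t]
    rw [this, ContinuousLinearMap.norm_smulRight_apply,
      ContinuousLinearMap.norm_smulRight_apply, mul_le_mul_iff_right₀ hpos]
  exact fun y hy => (hiff y w).mp (hsym _ ((hiff w y).mpr hy))

theorem left_symmetric_compact_operator_rank_one_left_symmetric_vector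
    {X Y : Type*} [NormedAddCommGroup X] [NormedSpace ℝ X] [CompleteSpace X]
    [NormedAddCommGroup Y] [NormedSpace ℝ Y] [CompleteSpace Y]
    (hXrefl : ReflexiveSp X) (hYrefl : ReflexiveSp Y)
    (hYsmooth : ∀ y : Y, ‖y‖ = 1 → SmoothPt y)
    (T : X →L[ℝ] Y) (hTcpt : IsCompactOperator T)
    (hTsym : LeftSymPt T) (hTnorm : ‖T‖ = 1) :
    ∃ (w : Y) (f : X →L[ℝ] ℝ), ‖w‖ = 1 ∧ ‖f‖ = 1 ∧
      (∀ x : X, T x = f x • w) ∧ LeftSymPt w := by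
  obtain ⟨x₀, g, hx₀, hg, hgT⟩ := exists_norm_attaining_of_isCompactOperator hXrefl T hTcpt
  have hw : ‖T x₀‖ = 1 := by
    refine le_antisymm (hTnorm ▸ T.unit_le_opNorm x₀ hx₀) ?_
    have := g.le_of_opNorm_le hg (T x₀)
    rwa [hgT, hTnorm, norm_one, one_mul] at this
  rw [hTnorm] at hgT
  have hform : ∀ x, T x = (g.comp T) x • T x₀ := by
    refine fun x => (SeparatingDual.eq_iff_forall_dual_eq (R := ℝ)).mpr fun ψ => ?_
    have h0 := LeftSymPt.comp_eq_zero_of_apply_eq_zero hYrefl hYsmooth hTcpt hTsym hx₀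
      (hw.trans hTnorm.symm) (ψ := ψ - ψ (T x₀) • g) (by simp [hgT])
    have h1 := DFunLike.congr_fun h0 x
    simp at h1 ⊢
    linarith
  have hTeq : T = (g.comp T).smulRight (T x₀) := ContinuousLinearMap.ext hform
  have hf : ‖g.comp T‖ = 1 := by
    have := congrArg norm hTeq
    rw [ContinuousLinearMap.norm_smulRight_apply, hw, mul_one, hTnorm] at this
    exact this.symm
  refine ⟨T x₀, g.comp T, hw, hf, hform, LeftSymPt.of_smulRight (f := g.comp T) ?_ ?_⟩
  · exact norm_ne_zero_iff.mp (by rw [hf]; exact one_ne_zero)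
  · rwa [← hTeq]
end

section
/- Let X be a real reflexive Banach space and let Y be a real reflexive, smooth Banach space. Let Z = X ⊕₁ ℝ denote X × ℝ with norm ‖(x,r)‖ = ‖x‖ + |r|, and let T : Z → Y be a nonzero compact bounded linear operator with ‖T‖ = 1 = ‖T(0,1)‖. Then T is left symmetric in the operator space if and only if there exist a unit vector w ∈ Y and a norm-one continuous linear functional f on Z such that T(z) = f(z)·w for all z ∈ Z, the kernel of f equals X × {0}, and w is a left symmetric point of Y. -/
open Filter Topology Set

section L1Sum

variable {X Y : Type*} [NormedAddCommGroup X] [NormedSpace ℝ X]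
  [NormedAddCommGroup Y] [NormedSpace ℝ Y]

theorem WithLp.toLp_one_prod_decomp (z : WithLp 1 (X × ℝ)) :
    z = WithLp.toLp 1 (z.fst, (0 : ℝ)) + z.snd • WithLp.toLp 1 ((0 : X), (1 : ℝ)) := by
  apply WithLp.ofLp_injective
  ext <;> simp

/-- An operator on `X ⊕₁ ℝ` is bounded by any common bound on both summands. -/
theorem ContinuousLinearMap.opNorm_le_of_l1_sum (A : WithLp 1 (X × ℝ) →L[ℝ] Y) {M : ℝ}
    (hM : 0 ≤ M) (hX : ∀ x : X, ‖A (WithLp.toLp 1 (x, (0 : ℝ)))‖ ≤ M * ‖x‖)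
    (he : ‖A (WithLp.toLp 1 ((0 : X), (1 : ℝ)))‖ ≤ M) : ‖A‖ ≤ M := by
  refine A.opNorm_le_bound hM fun z => ?_
  have hz : A z = A (WithLp.toLp 1 (z.fst, (0 : ℝ))) +
      z.snd • A (WithLp.toLp 1 ((0 : X), (1 : ℝ))) := by
    conv_lhs => rw [WithLp.toLp_one_prod_decomp z, map_add, map_smul]
  rw [hz, WithLp.prod_norm_eq_of_L1, mul_add]
  refine (norm_add_le _ _).trans (add_le_add (hX _) ?_)
  rw [norm_smul, mul_comm M]
  gcongr

theorem ContinuousLinearMap.norm_apply_l1_inl_le (A : WithLp 1 (X × ℝ) →L[ℝ] Y) (x : X) :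
    ‖A (WithLp.toLp 1 (x, (0 : ℝ)))‖ ≤ ‖A‖ * ‖x‖ := by
  simpa [WithLp.prod_norm_eq_of_L1] using A.le_opNorm (WithLp.toLp 1 (x, (0 : ℝ)))

theorem ContinuousLinearMap.norm_apply_l1_inr_one_le (A : WithLp 1 (X × ℝ) →L[ℝ] Y) :
    ‖A (WithLp.toLp 1 ((0 : X), (1 : ℝ)))‖ ≤ ‖A‖ := by
  simpa [WithLp.prod_norm_eq_of_L1] using A.le_opNorm (WithLp.toLp 1 ((0 : X), (1 : ℝ)))

/-- A left symmetric norm-one operator attaining its norm at `(0, 1)` vanishes on `X × {0}`. -/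
theorem LeftSymPt.apply_l1_sum_eq {T : WithLp 1 (X × ℝ) →L[ℝ] Y} (hT : LeftSymPt T)
    (hTnorm : ‖T‖ = 1) (hTe : ‖T (WithLp.toLp 1 ((0 : X), (1 : ℝ)))‖ = 1)
    (z : WithLp 1 (X × ℝ)) :
    T z = z.snd • T (WithLp.toLp 1 ((0 : X), (1 : ℝ))) := by
  set w := T (WithLp.toLp 1 ((0 : X), (1 : ℝ))) with hw
  set A : WithLp 1 (X × ℝ) →L[ℝ] Y := T - (WithLp.sndL 1 ℝ X ℝ).smulRight w with hA
  have hAz (z) : A z = T z - z.snd • w := by simp [hA]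
  have hAe : A (WithLp.toLp 1 ((0 : X), (1 : ℝ))) = 0 := by simp [hAz, hw]
  have hAx (x : X) : A (WithLp.toLp 1 (x, (0 : ℝ))) = T (WithLp.toLp 1 (x, (0 : ℝ))) := by
    simp [hAz]
  have hTA : BJOrth T A := fun t => by
    have h := (T + t • A).norm_apply_l1_inr_one_le
    rw [add_apply, smul_apply, hAe, smul_zero,
      add_zero, hTe] at h
    rwa [hTnorm]
  have hpos : 0 < 1 + ‖A‖ := by positivity
  have hle : ‖A‖ ≤ ‖A‖ / (1 + ‖A‖) := by
    refine (hT A hTA (-(‖A‖ / (1 + ‖A‖)))).trans ?_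
    refine ContinuousLinearMap.opNorm_le_of_l1_sum _ (by positivity) (fun x => ?_) ?_
    · have hx : (A + (-(‖A‖ / (1 + ‖A‖))) • T) (WithLp.toLp 1 (x, (0 : ℝ))) =
          (1 / (1 + ‖A‖)) • A (WithLp.toLp 1 (x, (0 : ℝ))) := by
        rw [add_apply, smul_apply, ← hAx]
        have : 1 / (1 + ‖A‖) = 1 + -(‖A‖ / (1 + ‖A‖)) := by field_simp; ring
        rw [this, add_smul, one_smul]
      rw [hx, norm_smul, Real.norm_of_nonneg (by positivity)]
      calc 1 / (1 + ‖A‖) * ‖A (WithLp.toLp 1 (x, (0 : ℝ)))‖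
          ≤ 1 / (1 + ‖A‖) * (‖A‖ * ‖x‖) := by gcongr; exact A.norm_apply_l1_inl_le x
        _ = ‖A‖ / (1 + ‖A‖) * ‖x‖ := by ring
    · rw [add_apply, smul_apply, hAe, zero_add,
        norm_smul, hTe, mul_one, norm_neg, Real.norm_of_nonneg (by positivity)]
  have hA0 : A = 0 := by
    rw [← norm_le_zero_iff]
    rw [le_div_iff₀ hpos] at hle
    nlinarith [norm_nonneg A]
  have h := hAz z
  rw [hA0, zero_apply] at h
  exact sub_eq_zero.mp h.symm

/-- If `T` vanishes on `X × {0}`, then `T ⊥_B A` forces orthogonality at `(0, 1)`. -/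
theorem BJOrth.apply_l1_inr_one {T A : WithLp 1 (X × ℝ) →L[ℝ] Y} (h : BJOrth T A)
    (hTx : ∀ x : X, T (WithLp.toLp 1 (x, (0 : ℝ))) = 0) (hTnorm : ‖T‖ = 1)
    (hTe : ‖T (WithLp.toLp 1 ((0 : X), (1 : ℝ)))‖ = 1) :
    BJOrth (T (WithLp.toLp 1 ((0 : X), (1 : ℝ)))) (A (WithLp.toLp 1 ((0 : X), (1 : ℝ)))) := by
  set u := T (WithLp.toLp 1 ((0 : X), (1 : ℝ)))
  set v := A (WithLp.toLp 1 ((0 : X), (1 : ℝ)))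
  intro t
  rw [hTe]
  by_contra! hlt
  set s : ℝ := 1 / (1 + ‖t‖ * ‖A‖) with hs
  have hpos : 0 < 1 + ‖t‖ * ‖A‖ := by positivity
  have hs0 : 0 < s := by positivity
  have hs1 : s ≤ 1 := by
    rw [hs, div_le_one hpos]
    linarith [mul_nonneg (norm_nonneg t) (norm_nonneg A)]
  have hsA : s * (‖t‖ * ‖A‖) = 1 - s := by
    rw [hs]; field_simp; ring
  have hconv : ‖u + (s * t) • v‖ ≤ (1 - s) + s * ‖u + t • v‖ := by
    have : u + (s * t) • v = (1 - s) • u + s • (u + t • v) := by module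
    rw [this]
    refine (norm_add_le _ _).trans_eq ?_
    rw [norm_smul, norm_smul, hTe, Real.norm_of_nonneg hs0.le,
      Real.norm_of_nonneg (sub_nonneg.mpr hs1), mul_one]
  have hbound : ‖T + (s * t) • A‖ ≤ (1 - s) + s * ‖u + t • v‖ := by
    refine ContinuousLinearMap.opNorm_le_of_l1_sum _ ?_ (fun x => ?_) hconv
    · exact add_nonneg (sub_nonneg.mpr hs1) (by positivity)
    · rw [add_apply, smul_apply, hTx, zero_add,
        norm_smul, norm_mul, Real.norm_of_nonneg hs0.le]
      calc s * ‖t‖ * ‖A (WithLp.toLp 1 (x, (0 : ℝ)))‖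
          ≤ s * ‖t‖ * (‖A‖ * ‖x‖) := by gcongr; exact A.norm_apply_l1_inl_le x
        _ = (1 - s) * ‖x‖ := by rw [← hsA]; ring
        _ ≤ _ := by
          gcongr
          exact le_add_of_nonneg_right (by positivity)
  have h1 := h (s * t)
  rw [hTnorm] at h1
  nlinarith

/-- If `T` vanishes on `X × {0}`, then orthogonality at `(0, 1)` gives `A ⊥_B T`. -/
theorem BJOrth.of_apply_l1_inr_one {T A : WithLp 1 (X × ℝ) →L[ℝ] Y}
    (hTx : ∀ x : X, T (WithLp.toLp 1 (x, (0 : ℝ))) = 0)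
    (h : BJOrth (A (WithLp.toLp 1 ((0 : X), (1 : ℝ)))) (T (WithLp.toLp 1 ((0 : X), (1 : ℝ))))) :
    BJOrth A T := fun t => by
  refine A.opNorm_le_of_l1_sum (norm_nonneg _) (fun x => ?_)
    ((h t).trans (A + t • T).norm_apply_l1_inr_one_le)
  simpa [hTx] using (A + t • T).norm_apply_l1_inl_le x

theorem norm_sndL_smulRight (v : Y) : ‖(WithLp.sndL 1 ℝ X ℝ).smulRight v‖ = ‖v‖ := by
  apply le_antisymm
  · exact ContinuousLinearMap.opNorm_le_of_l1_sum _ (norm_nonneg v)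
      (fun x => by simpa using by positivity) (by simp)
  · simpa using ((WithLp.sndL 1 ℝ X ℝ).smulRight v).norm_apply_l1_inr_one_le

theorem LeftSymPt.of_sndL_smulRight {w : Y}
    (h : LeftSymPt ((WithLp.sndL 1 ℝ X ℝ).smulRight w)) : LeftSymPt w := by
  have key (a b : Y) : BJOrth ((WithLp.sndL 1 ℝ X ℝ).smulRight a)
      ((WithLp.sndL 1 ℝ X ℝ).smulRight b) ↔ BJOrth a b := by
    refine forall_congr' fun t => ?_
    have : (WithLp.sndL 1 ℝ X ℝ).smulRight a + t • (WithLp.sndL 1 ℝ X ℝ).smulRight b =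
        (WithLp.sndL 1 ℝ X ℝ).smulRight (a + t • b) := by
      ext z
      simp [smul_comm t]
    rw [this, norm_sndL_smulRight, norm_sndL_smulRight]
  exact fun v hv => (key v w).mp (h _ ((key w v).mpr hv))

theorem BJOrth.neg_left {x y : Y} (h : BJOrth x y) : BJOrth (-x) y := fun t => by
  have := h (-t)
  rwa [norm_neg, show -x + t • y = -(x + (-t) • y) by module, norm_neg]

theorem BJOrth.neg_right {x y : Y} (h : BJOrth x y) : BJOrth x (-y) := fun t => by
  simpa using h (-t)

theorem LeftSymPt.neg {x : Y} (h : LeftSymPt x) : LeftSymPt (-x) := fun y hy =>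
  (h y (by simpa using hy.neg_left)).neg_right

end L1Sum

theorem left_symmetric_operator_on_l1_sum_characterization
    {X Y : Type*} [NormedAddCommGroup X] [NormedSpace ℝ X] [CompleteSpace X]
    [NormedAddCommGroup Y] [NormedSpace ℝ Y] [CompleteSpace Y]
    (hXrefl : ReflexiveSp X) (hYrefl : ReflexiveSp Y)
    (hYsmooth : ∀ y : Y, ‖y‖ = 1 → SmoothPt y)
    (T : WithLp 1 (X × ℝ) →L[ℝ] Y) (hTcpt : IsCompactOperator T) (hT0 : T ≠ 0)
    (hTnorm : ‖T‖ = 1)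
    (hTe : ‖T ((WithLp.equiv 1 (X × ℝ)).symm (0, 1))‖ = 1) :
    LeftSymPt T ↔
      ∃ (w : Y) (f : WithLp 1 (X × ℝ) →L[ℝ] ℝ), ‖w‖ = 1 ∧ ‖f‖ = 1 ∧
        (∀ z : WithLp 1 (X × ℝ), T z = f z • w) ∧
        (∀ z : WithLp 1 (X × ℝ), f z = 0 ↔ (WithLp.equiv 1 (X × ℝ) z).2 = 0) ∧
        LeftSymPt w := by
  change ‖T (WithLp.toLp 1 ((0 : X), (1 : ℝ)))‖ = 1 at hTe
  constructor
  · intro hT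
    have hTz := hT.apply_l1_sum_eq hTnorm hTe
    refine ⟨T (WithLp.toLp 1 ((0 : X), (1 : ℝ))), WithLp.sndL 1 ℝ X ℝ, hTe, ?_, hTz,
      fun z => Iff.rfl, ?_⟩
    · apply le_antisymm
      · exact ContinuousLinearMap.opNorm_le_of_l1_sum _ zero_le_one (fun x => by simp) (by simp)
      · simpa using (WithLp.sndL 1 ℝ X ℝ).norm_apply_l1_inr_one_le
    · refine LeftSymPt.of_sndL_smulRight (X := X) ?_
      convert hT
      ext1 z
      exact (hTz z).symm
  · rintro ⟨w, f, hw, -, hTf, hker, hsym⟩ A hTA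
    have hTx (x : X) : T (WithLp.toLp 1 (x, (0 : ℝ))) = 0 := by
      rw [hTf, (hker _).mpr rfl, zero_smul]
    refine BJOrth.of_apply_l1_inr_one hTx ?_
    have hsymT : LeftSymPt (T (WithLp.toLp 1 ((0 : X), (1 : ℝ)))) := by
      rw [hTf, norm_smul, hw, mul_one, Real.norm_eq_abs] at hTe
      rw [hTf]
      rcases eq_or_eq_neg_of_abs_eq hTe with h | h
      · simpa [h] using hsym
      · simpa [h] using hsym.neg
    exact hsymT _ (hTA.apply_l1_inr_one hTx hTnorm hTe)
end
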